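/- arXiv:1708.04509 — 2 statements merged into one kernel-verified Lean document; each statement's English description precedes it below -/
import Mathlib

section
/- For every n ≥ 2, the wedge sum S^n ∨ S^n is not homotopy dominated by the product S^n × S^n. -/
open CategoryTheory

/-- The `k`-dimensional unit sphere, i.e. the unit sphere in `ℝ^(k+1)`. -/
abbrev USphere (k : ℕ) : Type :=
  ↥(Metric.sphere (0 : EuclideanSpace ℝ (Fin (k + 1))) 1)

/-- A canonical basepoint on the `k`-sphere. -/
noncomputable def spherePt (k : ℕ) : USphere k :=
  ⟨EuclideanSpace.single 0 1, by
    simp [mem_sphere_zero_iff_norm, EuclideanSpace.norm_single]⟩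

/-- `X` is homotopy dominated by `P`. -/
def HDominates (P X : Type) [TopologicalSpace P] [TopologicalSpace X] : Prop :=
  ∃ (d : C(P, X)) (u : C(X, P)), (d.comp u).Homotopic (ContinuousMap.id X)

/-- The wedge sum of two pointed spaces: the quotient of the disjoint union
identifying the two basepoints. -/
def Wedge (X Y : Type) [TopologicalSpace X] [TopologicalSpace Y] (x₀ : X) (y₀ : Y) : Type :=
  Quot (fun a b : X ⊕ Y => a = Sum.inl x₀ ∧ b = Sum.inr y₀)

instance (X Y : Type) [TopologicalSpace X] [TopologicalSpace Y] (x₀ : X) (y₀ : Y) :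
    TopologicalSpace (Wedge X Y x₀ y₀) :=
  instTopologicalSpaceQuot

/-!
Write `S` for the `n`-sphere. A domination of `S ∨ S` by `S × S` yields maps `f g : S → S × S`, and
maps `F G : S × S → S` from the retractions onto the summands, such that `F ∘ f` and `G ∘ g` are
homotopic to the identity and `F ∘ g` is null-homotopic. The degrees of `F` and `G` on the two axes
and of the components of `f` and `g` form 2 × 2 matrices whose product is unitriangular, so the
determinant of the matrix of `(F, G)` is nonzero. This determinant is the mod 2 degree of the
composite of `(F, G)` with the collapse `S × S → S ∧ S`. But every point of `S ∨ S` lies in one of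
the summands, so `F` or `G` takes the base point at each point of `S × S` and the composite is
constant: its degree is zero.

The mod 2 degree of a map from a torus to `ℝᵐ ∪ {∞}` is obtained by evaluating an explicit cochain
on fine triangulations of the torus, and degrees on spheres and their products are computed after
collapsing a torus onto them. Such degrees are additive because, up to homotopy, the diagonal of the
circle runs along one axis of the torus and then along the other, and they are multiplicative under
composition because `f ∧ id` and `id ∧ f` are conjugate by a rotation.
-/

open Filter Topology

namespace WedgeDomination

section Cochain

theorem sum_prod_coboundary_succAbove {R : Type*} [CommRing R] [CharP R 2] {m : ℕ}
    (s : Fin m → Fin (m + 2) → R) :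
    ∑ k : Fin (m + 2), ∏ i : Fin m,
      (s i (k.succAbove i.castSucc) + s i (k.succAbove i.succ)) = 0 := by
  induction m with
  | zero => simp [CharTwo.two_eq_zero]
  | succ m ih =>
    have hshift := ih fun i j => s i.succ j.succ
    rw [Fin.sum_univ_succ] at hshift ⊢
    rw [Fin.sum_univ_succ]
    simp only [Fin.prod_univ_succ, Fin.zero_succAbove, Fin.castSucc_zero, Fin.succ_succAbove_zero,
      Fin.succ_succAbove_succ, Fin.castSucc_succ, ← Finset.mul_sum] at hshift ⊢
    set P := ∏ i : Fin m, (s i.succ i.castSucc.succ.succ + s i.succ i.succ.succ.succ)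
    linear_combination (s 0 0 + s 0 (Fin.succ 0)) * hshift +
      s 0 (Fin.succ 0).succ * P * CharTwo.two_eq_zero (R := R)

/-- The one-point compactification of `ℝᵐ`, the model of the `m`-sphere on which the degree is
computed. -/
abbrev Compactified (m : ℕ) : Type := OnePoint (Fin m → ℝ)

/-- The closed cube `[-1, 1]ᵐ` inside the compactification of `ℝᵐ`. -/
def unitBox (m : ℕ) : Set (Compactified m) := (↑) '' Metric.closedBall (0 : Fin m → ℝ) 1

/-- The label, mod 2, of a point by the sign of its `i`-th coordinate; the label of `∞` is
immaterial, as it is used only inside `unitBox`. -/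
noncomputable def signLabel {m : ℕ} (i : Fin m) (v : Compactified m) : ZMod 2 :=
  v.elim 0 fun x => if 0 ≤ x i then 1 else 0

open Classical in
/-- The mod 2 `m`-cochain whose value on a simplex with vertices in the cube is the cup product of
the coboundaries of the sign labels; it vanishes on simplices leaving the cube. On small simplices
it is a cocycle representing the generator of the top cohomology of the compactification. -/
noncomputable def signCochain {m : ℕ} (v : Fin (m + 1) → Compactified m) : ZMod 2 :=
  if ∀ k, v k ∈ unitBox m then
    ∏ i, (signLabel i (v i.castSucc) + signLabel i (v i.succ)) else 0

variable {m : ℕ}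

theorem signCochain_eq_zero_of_notMem {v : Fin (m + 1) → Compactified m} {k : Fin (m + 1)}
    (hk : v k ∉ unitBox m) : signCochain v = 0 :=
  if_neg fun h => hk (h k)

theorem signCochain_eq_zero_of_signLabel_eq {v : Fin (m + 1) → Compactified m} {i : Fin m}
    (hi : signLabel i (v i.castSucc) = signLabel i (v i.succ)) : signCochain v = 0 := by
  unfold signCochain
  split_ifs
  · exact Finset.prod_eq_zero (Finset.mem_univ i) (by rw [hi, CharTwo.add_self_eq_zero])
  · rfl

/-- A set on which the sign cochain is a cocycle for one of three evident reasons. -/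
def IsSmall (U : Set (Compactified m)) : Prop :=
  U ⊆ unitBox m ∨ Disjoint U (unitBox m) ∨
    ∃ i, ∀ x ∈ U, ∀ y ∈ U, signLabel i x = signLabel i y

theorem IsSmall.sum_signCochain_succAbove {U : Set (Compactified m)} (hU : IsSmall U)
    {v : Fin (m + 2) → Compactified m} (hv : ∀ k, v k ∈ U) :
    ∑ k : Fin (m + 2), signCochain (fun j => v (k.succAbove j)) = 0 := by
  obtain hbox | hdisj | ⟨i, hi⟩ := hU
  · rw [← sum_prod_coboundary_succAbove fun i k => signLabel i (v k)]
    exact Finset.sum_congr rfl fun k _ => if_pos fun j => hbox (hv _)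
  · exact Finset.sum_eq_zero fun k _ =>
      signCochain_eq_zero_of_notMem (k := 0) (hdisj.notMem_of_mem_left (hv _))
  · exact Finset.sum_eq_zero fun k _ =>
      signCochain_eq_zero_of_signLabel_eq (hi _ (hv _) _ (hv _))

theorem isClosed_unitBox (m : ℕ) : IsClosed (unitBox m) :=
  ((isCompact_closedBall 0 1).image OnePoint.continuous_coe).isClosed

theorem exists_isSmall_isOpen (p : Compactified m) : ∃ U, IsOpen U ∧ IsSmall U ∧ p ∈ U := by
  by_cases hp : p ∈ unitBox m
  swap
  · exact ⟨_, (isClosed_unitBox m).isOpen_compl, .inr (.inl disjoint_compl_left), hp⟩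
  obtain ⟨x, -, rfl⟩ := hp
  by_cases hx : ∃ i, x i ≠ 0
  swap
  · refine ⟨(↑) '' Metric.ball 0 1, OnePoint.isOpen_image_coe.2 Metric.isOpen_ball,
      .inl (Set.image_mono Metric.ball_subset_closedBall), x, ?_, rfl⟩
    rw [show x = 0 from funext fun i => by_contra fun hi => hx ⟨i, hi⟩]
    exact Metric.mem_ball_self one_pos
  obtain ⟨i, hi⟩ := hx
  obtain hneg | hpos := hi.lt_or_gt
  · refine ⟨(↑) '' {y : Fin m → ℝ | y i < 0},
      OnePoint.isOpen_image_coe.2 (isOpen_lt (continuous_apply i) continuous_const),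
      .inr (.inr ⟨i, ?_⟩), x, hneg, rfl⟩
    rintro _ ⟨y, hy, rfl⟩ _ ⟨z, hz, rfl⟩
    exact (if_neg (not_le.2 hy)).trans (if_neg (not_le.2 hz)).symm
  · refine ⟨(↑) '' {y : Fin m → ℝ | 0 < y i},
      OnePoint.isOpen_image_coe.2 (isOpen_lt continuous_const (continuous_apply i)),
      .inr (.inr ⟨i, ?_⟩), x, hpos, rfl⟩
    rintro _ ⟨y, hy, rfl⟩ _ ⟨z, hz, rfl⟩
    exact (if_pos (le_of_lt hy)).trans (if_pos (le_of_lt hz)).symm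

theorem exists_pos_sum_signCochain_succAbove {K : Type*} [PseudoMetricSpace K] [CompactSpace K]
    (F : C(K, Compactified m)) :
    ∃ δ > 0, ∀ v : Fin (m + 2) → K, (∀ j k, dist (v j) (v k) < δ) →
      ∑ k : Fin (m + 2), signCochain (fun j => F (v (k.succAbove j))) = 0 := by
  obtain ⟨δ, hδ, hball⟩ := lebesgue_number_lemma_of_metric_sUnion (s := Set.univ)
    (c := (F ⁻¹' ·) '' {U | IsOpen U ∧ IsSmall U}) isCompact_univ
    (by rintro _ ⟨U, ⟨hU, -⟩, rfl⟩; exact hU.preimage F.continuous)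
    fun z _ => by
      obtain ⟨U, hU, hsmall, hz⟩ := exists_isSmall_isOpen (F z)
      exact ⟨F ⁻¹' U, ⟨U, ⟨hU, hsmall⟩, rfl⟩, hz⟩
  refine ⟨δ, hδ, fun v hv => ?_⟩
  obtain ⟨_, ⟨U, ⟨-, hsmall⟩, rfl⟩, hU⟩ := hball (v 0) trivial
  exact hsmall.sum_signCochain_succAbove fun k => hU (hv k 0)

end Cochain

section GridSum

variable {N m : ℕ} {Y : Type*}

/-- The `k`-th vertex of the simplex of the Freudenthal triangulation of the discrete torus that
starts at `x` and increases the coordinate `i` at step `σ i`. -/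
def gridVertex (x : Fin m → ZMod N) (σ : Equiv.Perm (Fin m)) (k : ℕ) : Fin m → ZMod N :=
  fun i => x i + if (σ i : ℕ) < k then 1 else 0

/-- The sum of the cochain `ω` over the images under `a` of all top-dimensional simplices of the
Freudenthal triangulation of the discrete torus `(ℤ/N)ᵐ`. -/
def gridSum [NeZero N] (ω : (Fin (m + 1) → Y) → ZMod 2) (a : (Fin m → ZMod N) → Y) : ZMod 2 :=
  ∑ x, ∑ σ, ω fun k : Fin (m + 1) => a (gridVertex x σ k)

theorem gridVertex_add (x y : Fin m → ZMod N) (σ : Equiv.Perm (Fin m)) (k : ℕ) :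
    gridVertex (x + y) σ k = gridVertex x σ k + y :=
  funext fun _ => add_right_comm _ _ _

theorem gridVertex_swap_mul (x : Fin m → ZMod N) (σ : Equiv.Perm (Fin m)) {p q : Fin m} {k : ℕ}
    (hpq : (p : ℕ) < k ↔ (q : ℕ) < k) :
    gridVertex x (Equiv.swap p q * σ) k = gridVertex x σ k := by
  funext i
  have hswap : (Equiv.swap p q (σ i) : ℕ) < k ↔ (σ i : ℕ) < k := by
    rw [Equiv.swap_apply_def]
    split_ifs with hp hq
    · rw [hp, hpq]
    · rw [hq, hpq]
    · rfl
  simp only [gridVertex, Equiv.Perm.mul_apply, hswap]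

theorem gridVertex_comp (x : Fin m → ZMod N) (σ e : Equiv.Perm (Fin m)) (k : ℕ) :
    gridVertex x σ k ∘ e = gridVertex (x ∘ e) (σ * e) k :=
  rfl

theorem finRotate_symm_zero (m : ℕ) : (finRotate (m + 1)).symm 0 = Fin.last m := by
  rw [Equiv.symm_apply_eq, finRotate_last]

theorem finRotate_symm_succ (i : Fin m) : (finRotate (m + 1)).symm i.succ = i.castSucc := by
  rw [Equiv.symm_apply_eq, finRotate_apply, Fin.coeSucc_eq_succ]

/-- Deleting the first vertex of a simplex yields the simplex with one more step at the end, minus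
its last vertex, translated by the first step. -/
theorem gridVertex_succ (x : Fin (m + 1) → ZMod N) (σ : Equiv.Perm (Fin (m + 1))) {k : ℕ}
    (hk : k ≤ m) :
    gridVertex x σ (k + 1) =
      gridVertex (x + Pi.single (σ.symm 0) 1) ((finRotate (m + 1)).symm * σ) k := by
  funext i
  obtain ⟨p, rfl⟩ := σ.symm.surjective i
  induction p using Fin.cases with
  | zero => simp [gridVertex, -finRotate_symm_apply, finRotate_symm_zero, hk]
  | succ p => simp [gridVertex, -finRotate_symm_apply, finRotate_symm_succ]

theorem gridVertex_cons (c : ZMod N) (x : Fin m → ZMod N) (τ : Equiv.Perm (Fin m)) {k : ℕ}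
    (hk : k ≤ m) :
    gridVertex (Fin.cons c x)
        ((finRotate (m + 1)).symm * Equiv.Perm.decomposeFin.symm (0, τ)) k =
      Fin.cons c (gridVertex x τ k) := by
  funext i
  induction i using Fin.cases with
  | zero => simp [gridVertex, -finRotate_symm_apply, finRotate_symm_zero, hk]
  | succ i => simp [gridVertex, -finRotate_symm_apply, finRotate_symm_succ]

theorem cons_add_single_zero (c : ZMod N) (x : Fin m → ZMod N) :
    (Fin.cons c x : Fin (m + 1) → ZMod N) + Pi.single 0 1 = Fin.cons (c + 1) x := by
  funext i
  induction i using Fin.cases <;> simp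

theorem cons_add_single_succ (c : ZMod N) (x : Fin m → ZMod N) (i : Fin m) :
    (Fin.cons c x : Fin (m + 1) → ZMod N) + Pi.single i.succ 1 =
      Fin.cons c (x + Pi.single i 1) := by
  funext j
  induction j using Fin.cases <;> simp [Pi.single_apply]

variable (ω : (Fin (m + 1) → Y) → ZMod 2)

/-- An inner face is shared with the simplex in which the two adjacent steps are exchanged. -/
theorem sum_inner_face_eq_zero (G : (Fin (m + 1) → ZMod N) → Y) (x : Fin (m + 1) → ZMod N)
    (l : Fin m) :
    ∑ σ, ω (fun j => G (gridVertex x σ (l.castSucc.succ.succAbove j))) = 0 := by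
  refine Finset.sum_involution (fun σ _ => Equiv.swap l.castSucc l.succ * σ) (fun σ _ => ?_)
    (fun σ _ _ h => ?_) (fun _ _ => Finset.mem_univ _) fun σ _ => Equiv.swap_mul_self_mul _ _ σ
  · have hface : ∀ j, gridVertex x (Equiv.swap l.castSucc l.succ * σ)
        (l.castSucc.succ.succAbove j) = gridVertex x σ (l.castSucc.succ.succAbove j) := by
      refine fun j => gridVertex_swap_mul x σ ?_
      have := Fin.val_ne_of_ne (Fin.succAbove_ne l.castSucc.succ j)
      simp only [Fin.val_castSucc, Fin.val_succ] at this ⊢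
      omega
    simp only [hface, CharTwo.add_self_eq_zero]
  · exact (Fin.castSucc_lt_succ).ne (Equiv.swap_eq_one_iff.1 (mul_eq_right.1 h))

variable [NeZero N]

theorem gridSum_comp_perm (a : (Fin m → ZMod N) → Y) (e : Equiv.Perm (Fin m)) :
    gridSum ω (fun x => a (x ∘ e)) = gridSum ω a := by
  simp only [gridSum, gridVertex_comp]
  exact Fintype.sum_equiv (e.arrowCongr (Equiv.refl _)).symm _ _ fun x =>
    Fintype.sum_equiv (Equiv.mulRight e) _ _ fun σ => rfl

theorem gridSum_eq_zero_of_periodic {a : (Fin m → ZMod N) → Y} {d : Fin m → ZMod N} (hd : d ≠ 0)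
    (hdd : d + d = 0) (ha : ∀ x, a (x + d) = a x) : gridSum ω a = 0 := by
  refine Finset.sum_involution (fun x _ => x + d) (fun x _ => ?_) (fun x _ _ => by simpa using hd)
    (fun _ _ => Finset.mem_univ _) (fun x _ => by rw [add_assoc, hdd, add_zero])
  simp only [gridVertex_add, ha, CharTwo.add_self_eq_zero]

/-- The first face of one simplex is the last face of another one, which lies in the same slab
unless the first step is in the direction `0`. -/
theorem sum_first_face (G : (Fin (m + 1) → ZMod N) → Y) (c : ZMod N)
    (σ : Equiv.Perm (Fin (m + 1))) :
    ∑ x : Fin m → ZMod N,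
        ω (fun j => G (gridVertex (Fin.cons c x) σ ((0 : Fin (m + 2)).succAbove j))) =
      ∑ x : Fin m → ZMod N, ω (fun j : Fin (m + 1) =>
        G (gridVertex (Fin.cons (if σ 0 = 0 then c + 1 else c) x)
          ((finRotate (m + 1)).symm * σ) j)) := by
  simp only [Fin.zero_succAbove, Fin.val_succ]
  simp only [gridVertex_succ _ _ (Fin.is_le _)]
  split_ifs with h
  · rw [(σ.symm_apply_eq).2 h.symm]
    simp only [cons_add_single_zero]
  · obtain ⟨i, hi⟩ := Fin.exists_succ_eq.2 fun h0 => h (σ.symm_apply_eq.1 h0).symm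
    simp only [← hi, cons_add_single_succ]
    exact Equiv.sum_comp (Equiv.addRight (Pi.single i 1)) fun x => ω fun j : Fin (m + 1) =>
      G (gridVertex (Fin.cons c x) ((finRotate (m + 1)).symm * σ) j)

theorem sum_first_face_add_sum_last_face (G : (Fin (m + 1) → ZMod N) → Y) (c : ZMod N)
    (hG : ∀ x σ, ∑ k : Fin (m + 2),
      ω (fun j => G (gridVertex (Fin.cons c x) σ (k.succAbove j))) = 0) :
    ∑ σ, ∑ x : Fin m → ZMod N,
        ω (fun j => G (gridVertex (Fin.cons c x) σ ((0 : Fin (m + 2)).succAbove j))) +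
      ∑ σ, ∑ x : Fin m → ZMod N,
        ω (fun j => G (gridVertex (Fin.cons c x) σ ((Fin.last (m + 1)).succAbove j))) = 0 := by
  have hinner (l : Fin m) : ∑ σ, ∑ x : Fin m → ZMod N,
      ω (fun j => G (gridVertex (Fin.cons c x) σ (l.castSucc.succ.succAbove j))) = 0 := by
    rw [Finset.sum_comm]
    exact Finset.sum_eq_zero fun x _ => sum_inner_face_eq_zero ω G _ l
  have htotal : ∑ k : Fin (m + 2), ∑ σ, ∑ x : Fin m → ZMod N,
      ω (fun j => G (gridVertex (Fin.cons c x) σ (k.succAbove j))) = 0 := by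
    rw [Finset.sum_comm]
    refine Finset.sum_eq_zero fun σ _ => ?_
    rw [Finset.sum_comm]
    exact Finset.sum_eq_zero fun x _ => hG x σ
  rwa [Fin.sum_univ_succ, Fin.sum_univ_castSucc, Fintype.sum_eq_zero _ hinner, zero_add,
    Fin.succ_last] at htotal

/-- Stokes' theorem for a slab of the discrete torus. -/
theorem gridSum_cons_add_one (G : (Fin (m + 1) → ZMod N) → Y) (c : ZMod N)
    (hG : ∀ x σ, ∑ k : Fin (m + 2),
      ω (fun j => G (gridVertex (Fin.cons c x) σ (k.succAbove j))) = 0) :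
    gridSum ω (fun x => G (Fin.cons (c + 1) x)) = gridSum ω (fun x => G (Fin.cons c x)) := by
  let face (d : ZMod N) (σ : Equiv.Perm (Fin (m + 1))) : ZMod 2 := ∑ x : Fin m → ZMod N,
    ω fun j : Fin (m + 1) => G (gridVertex (Fin.cons d x) ((finRotate (m + 1)).symm * σ) j)
  have hface (d) : ∑ τ, face d (Equiv.Perm.decomposeFin.symm (0, τ)) =
      gridSum ω fun x => G (Fin.cons d x) := by
    simp only [face, gridSum, gridVertex_cons _ _ _ (Fin.is_le _)]
    exact Finset.sum_comm
  have hlast : ∑ σ, ∑ x : Fin m → ZMod N,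
      ω (fun j => G (gridVertex (Fin.cons c x) σ ((Fin.last (m + 1)).succAbove j))) =
        ∑ σ, face c σ := by
    simp only [Fin.succAbove_last, Fin.val_castSucc]
    exact (Equiv.sum_comp (Equiv.mulLeft (finRotate (m + 1)).symm) _).symm
  have hstokes : ∑ σ, (face (if σ 0 = 0 then c + 1 else c) σ + face c σ) = 0 := by
    rw [Finset.sum_add_distrib, ← hlast, ← sum_first_face_add_sum_last_face ω G c hG]
    simp only [face, sum_first_face]
  have hreindex : ∑ σ, (face (if σ 0 = 0 then c + 1 else c) σ + face c σ) =
      gridSum ω (fun x => G (Fin.cons (c + 1) x)) + gridSum ω (fun x => G (Fin.cons c x)) := by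
    rw [← Equiv.sum_comp Equiv.Perm.decomposeFin.symm, Fintype.sum_prod_type,
      Fintype.sum_eq_single 0]
    · simp only [Equiv.Perm.decomposeFin_symm_apply_zero, if_true, Finset.sum_add_distrib, hface]
    · intro p hp
      simp only [Equiv.Perm.decomposeFin_symm_apply_zero, if_neg hp, CharTwo.add_self_eq_zero,
        Finset.sum_const_zero]
  rw [← CharTwo.add_eq_zero, ← hreindex, hstokes]

end GridSum

section OnePointCompactification

open OnePoint unitInterval

section Collapse

variable {Z F : Type*} {j : F → Z}

open Classical in
/-- The Pontryagin–Thom collapse of an open embedding `j`: the inverse of `j` on its range, and `∞`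
elsewhere. -/
noncomputable def collapse (j : F → Z) (z : Z) : OnePoint F :=
  if h : ∃ y, j y = z then h.choose else ∞

theorem collapse_apply (hj : Function.Injective j) (y : F) : collapse j (j y) = y := by
  have h : ∃ y', j y' = j y := ⟨y, rfl⟩
  rw [collapse, dif_pos h, hj h.choose_spec]

theorem collapse_of_notMem_range {z : Z} (hz : z ∉ Set.range j) : collapse j z = ∞ :=
  dif_neg hz

end Collapse

variable {Z E F : Type*} [TopologicalSpace Z] [TopologicalSpace E] [TopologicalSpace F]

theorem continuous_of_isClosed_separating {f : Z → OnePoint F}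
    (hfin : ∀ z, f z ≠ ∞ → ContinuousAt f z)
    (hinf : ∀ K : Set F, IsCompact K →
      ∃ C, IsClosed C ∧ f ⁻¹' ((↑) '' K) ⊆ C ∧ ∀ z ∈ C, f z ≠ ∞) :
    Continuous f := by
  refine continuous_def.2 fun s hs => isOpen_iff_mem_nhds.2 fun z hz => ?_
  by_cases hfz : f z = ∞
  · have hmem : ∞ ∈ s := hfz ▸ hz
    obtain ⟨C, hC, hKC, hfC⟩ := hinf _ ((isOpen_iff_of_mem hmem).1 hs).2
    refine mem_of_superset (hC.isOpen_compl.mem_nhds fun hzC => hfC z hzC hfz) fun w hw => ?_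
    by_contra hws
    obtain ⟨y, hy⟩ := ne_infty_iff_exists.1 fun h : f w = ∞ => hws (by rwa [Set.mem_preimage, h])
    exact hw (hKC ⟨y, fun hys => hws (by rwa [Set.mem_preimage, ← hy]), hy⟩)
  · exact hfin z hfz (hs.mem_nhds hz)

theorem continuous_collapse [T2Space Z] {j : F → Z} (hj : IsOpenEmbedding j) :
    Continuous (collapse j) := by
  have hrange {z} (hz : collapse j z ≠ ∞) : z ∈ Set.range j :=
    by_contra fun h => hz (collapse_of_notMem_range h)
  refine continuous_of_isClosed_separating (fun z hz => ?_) fun K hK =>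
    ⟨j '' K, (hK.image hj.continuous).isClosed, ?_, ?_⟩
  · obtain ⟨y, rfl⟩ := hrange hz
    rw [← hj.continuousAt_iff, show collapse j ∘ j = (↑) from
      funext (collapse_apply hj.injective)]
    exact continuous_coe.continuousAt
  · rintro z ⟨x, hx, hxz⟩
    obtain ⟨y, rfl⟩ := hrange (hxz ▸ coe_ne_infty x)
    rw [collapse_apply hj.injective, coe_injective.eq_iff] at hxz
    exact ⟨y, hxz ▸ hx, rfl⟩
  · rintro _ ⟨y, -, rfl⟩
    rw [collapse_apply hj.injective]
    exact coe_ne_infty y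

theorem continuous_elim_infty_of_isProperMap [T2Space Z] [T2Space E]
    [LocallyCompactSpace E] {h : Z × E → F} (hh : IsProperMap h) :
    Continuous fun p : Z × OnePoint E => p.2.elim ∞ fun x => (h (p.1, x) : OnePoint F) := by
  refine continuous_of_isClosed_separating ?_ fun K hK => ⟨Prod.map id (↑) '' (h ⁻¹' K),
    ((hh.isCompact_preimage hK).image (continuous_id.prodMap continuous_coe)).isClosed, ?_, ?_⟩
  · rintro ⟨z, p⟩ hp
    obtain ⟨x, rfl⟩ := ne_infty_iff_exists.1 fun h : p = ∞ => hp (by rw [h, elim_infty])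
    exact ((IsOpenEmbedding.id.prodMap isOpenEmbedding_coe).continuousAt_iff (x := (z, x))).1
      (continuous_coe.comp hh.continuous).continuousAt
  · rintro ⟨z, p⟩ ⟨y, hy, hyp⟩
    induction p using OnePoint.rec with
    | infty => exact (coe_ne_infty y hyp).elim
    | coe x =>
      have hyx : y = h (z, x) := coe_injective hyp
      exact ⟨(z, x), by rwa [Set.mem_preimage, ← hyx], rfl⟩
  · rintro _ ⟨⟨z, x⟩, -, rfl⟩
    exact coe_ne_infty _

section Smash

variable [T2Space E] [LocallyCompactSpace E] [T2Space F] [LocallyCompactSpace F]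

/-- The canonical map from the product of two one-point compactifications to the one-point
compactification of the product, which identifies the latter with the smash product. -/
noncomputable def smash : C(OnePoint E × OnePoint F, OnePoint (E × F)) where
  toFun := collapse (Prod.map (↑) (↑))
  continuous_toFun :=
    continuous_collapse (isOpenEmbedding_coe.prodMap isOpenEmbedding_coe)

@[simp]
theorem smash_coe_coe (x : E) (y : F) : smash ((x : OnePoint E), (y : OnePoint F)) = ↑(x, y) :=
  collapse_apply (coe_injective.prodMap coe_injective) (x, y)

@[simp]
theorem smash_infty_left (q : OnePoint F) : smash ((∞ : OnePoint E), q) = ∞ :=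
  collapse_of_notMem_range fun ⟨_, h⟩ => coe_ne_infty _ (congrArg Prod.fst h)

@[simp]
theorem smash_infty_right (p : OnePoint E) : smash (p, (∞ : OnePoint F)) = ∞ :=
  collapse_of_notMem_range fun ⟨_, h⟩ => coe_ne_infty _ (congrArg Prod.snd h)

theorem isQuotientMap_smash : IsQuotientMap (smash (E := E) (F := F)) := by
  refine IsQuotientMap.of_surjective_continuous (fun p => ?_) smash.continuous
  induction p using OnePoint.rec with
  | infty => exact ⟨(∞, ∞), smash_infty_left _⟩
  | coe p => exact ⟨(↑p.1, ↑p.2), smash_coe_coe _ _⟩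

/-- The map `g` is the smash product of `f` with the identity. -/
theorem exists_comp_smash_eq_smash_comp {f : C(OnePoint E, OnePoint E)} (hf : f ∞ = ∞) :
    ∃ g : C(OnePoint (E × F), OnePoint (E × F)), ∀ p q, g (smash (p, q)) = smash (f p, q) := by
  have hfactor : Function.FactorsThrough (smash.comp (f.prodMap (.id (OnePoint F)))) smash := by
    rintro ⟨p, q⟩ ⟨p', q'⟩ h
    induction p using OnePoint.rec <;> induction q using OnePoint.rec <;>
      induction p' using OnePoint.rec <;> induction q' using OnePoint.rec <;>
      simp_all
  exact ⟨isQuotientMap_smash.lift _ hfactor, fun p q =>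
    DFunLike.congr_fun (isQuotientMap_smash.lift_comp _ hfactor) (p, q)⟩

end Smash

section Normed

variable {E : Type*} [NormedAddCommGroup E] [NormedSpace ℝ E]

/-- The rotation of `E × E` by the angle `θ`. -/
noncomputable def rotation (θ : ℝ) (p : E × E) : E × E :=
  (θ.cos • p.1 + θ.sin • p.2, θ.cos • p.2 - θ.sin • p.1)

theorem rotation_neg_rotation (θ : ℝ) (p : E × E) : rotation (-θ) (rotation θ p) = p := by
  ext <;> simp only [rotation, Real.cos_neg, Real.sin_neg] <;> match_scalars
  all_goals first | ring1 | linear_combination θ.cos_sq_add_sin_sq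

theorem isProperMap_rotation (θ : ℝ) :
    IsProperMap fun q : I × E × E => rotation (q.1 * θ) q.2 := by
  let e : I × E × E ≃ₜ I × E × E :=
    { toFun q := (q.1, rotation (q.1 * θ) q.2)
      invFun q := (q.1, rotation (-(q.1 * θ)) q.2)
      left_inv q := by simp only [rotation_neg_rotation]
      right_inv q := by
        simpa only [neg_neg] using congrArg (Prod.mk q.1) (rotation_neg_rotation (-(q.1 * θ)) q.2)
      continuous_toFun := by unfold rotation; fun_prop
      continuous_invFun := by unfold rotation; fun_prop }
  exact isProperMap_snd_of_compactSpace.comp e.isProperMap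

variable [LocallyCompactSpace E]

theorem exists_rotation_homotopic_id (θ : ℝ) :
    ∃ R : C(OnePoint (E × E), OnePoint (E × E)), R.Homotopic (.id _) ∧ R ∞ = ∞ ∧
      ∀ p : E × E, R p = ↑(rotation θ p) := by
  let H : C(I × OnePoint (E × E), OnePoint (E × E)) :=
    ⟨_, continuous_elim_infty_of_isProperMap (isProperMap_rotation θ)⟩
  refine ⟨H.curry 1, ContinuousMap.Homotopic.symm ⟨H, fun p => ?_, fun p => rfl⟩, rfl, fun p => ?_⟩
  · induction p using OnePoint.rec <;> simp [H, rotation]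
  · simp [H]

/-- Rotating `E × E` by a quarter turn conjugates the smash product of `f` with the identity into
the smash product of the identity with `f`. -/
theorem smash_comp_prodMap_homotopic {f g : C(OnePoint E, OnePoint E)} (hf : f ∞ = ∞)
    (hg : g ∞ = ∞) :
    (smash.comp (g.prodMap f)).Homotopic (smash.comp ((g.comp f).prodMap (.id _))) := by
  obtain ⟨Sf, hSf⟩ := exists_comp_smash_eq_smash_comp (F := E) hf
  obtain ⟨Sg, hSg⟩ := exists_comp_smash_eq_smash_comp (F := E) hg
  obtain ⟨R, hR, hR_infty, hR_coe⟩ := exists_rotation_homotopic_id (E := E) (Real.pi / 2)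
  obtain ⟨R', hR', hR'_infty, hR'_coe⟩ := exists_rotation_homotopic_id (E := E) (-(Real.pi / 2))
  have hSf_infty : Sf ∞ = ∞ := by simpa [hf] using hSf ∞ ∞
  have hconj (p q : OnePoint E) : R' (Sf (R (smash (p, q)))) = smash (p, f q) := by
    induction p using OnePoint.rec with
    | infty => simp only [smash_infty_left, hR_infty, hSf_infty, hR'_infty]
    | coe x =>
      induction q using OnePoint.rec with
      | infty => simp only [smash_infty_right, hR_infty, hSf_infty, hR'_infty, hf]
      | coe y =>
        have hRxy : R (smash (↑x, ↑y)) = smash (↑y, ↑(-x)) := by simp [hR_coe, rotation]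
        rw [hRxy, hSf]
        cases f y using OnePoint.rec <;> simp [hR'_infty, hR'_coe, rotation]
  have hleft : smash.comp (g.prodMap f) = (Sg.comp (R'.comp (Sf.comp R))).comp smash := by
    ext ⟨p, q⟩
    simp [hconj, hSg]
  have hright : smash.comp ((g.comp f).prodMap (.id _)) = (Sg.comp Sf).comp smash := by
    ext ⟨p, q⟩
    simp [hSf, hSg]
  rw [hleft, hright]
  refine ContinuousMap.Homotopic.comp ?_ (.refl _)
  exact .comp (.refl Sg) (.comp hR' (.comp (.refl Sf) hR))

end Normed
end OnePointCompactification

section Push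

open OnePoint unitInterval

variable {E : Type*} [NormedAddCommGroup E] [NormedSpace ℝ E]

open Classical in
/-- The homotopy of the compactification of `E` that translates the points close to `q` far away in
the direction `e`, and at time `1` moves `q` itself to `∞`. -/
noncomputable def push (q e : E) (z : I × OnePoint E) : OnePoint E :=
  z.2.elim ∞ fun x =>
    if (1 - z.1 : ℝ) + ‖x - q‖ = 0 then ∞ else ↑(x + (z.1 / (1 - z.1 + ‖x - q‖) : ℝ) • e)

theorem push_coe_ne_infty {q e x : E} {s : I} :
    push q e (s, ↑x) ≠ ∞ ↔ (1 - s : ℝ) + ‖x - q‖ ≠ 0 := by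
  simp only [push, elim_some]
  split_ifs with h <;> simp [h]

theorem isCompact_setOf_norm_smul_add_smul_le [ProperSpace E] (q : E) {e : E} (he : ‖e‖ = 1)
    (R : ℝ) :
    IsCompact {z : I × E | ‖(1 - z.1 + ‖z.2 - q‖ : ℝ) • z.2 + (z.1 : ℝ) • e‖ ≤
      R * (1 - z.1 + ‖z.2 - q‖)} := by
  refine (isCompact_univ.prod (isCompact_closedBall 0 (|R| + ‖q‖ + 1))).of_isClosed_subset
    (isClosed_le (by fun_prop) (by fun_prop)) ?_
  rintro ⟨s, x⟩ hx
  refine ⟨trivial, mem_closedBall_zero_iff.2 (not_lt.1 fun hlarge => ?_)⟩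
  have hs0 := s.2.1
  have hs1 := s.2.2
  have hd : 1 < 1 - s + ‖x - q‖ := by
    linarith [norm_sub_norm_le x q, abs_nonneg R]
  have hlower := norm_sub_le_norm_add ((1 - s + ‖x - q‖ : ℝ) • x) ((s : ℝ) • e)
  rw [norm_smul, norm_smul, he, Real.norm_of_nonneg (zero_lt_one.trans hd).le,
    Real.norm_of_nonneg hs0] at hlower
  have hx' : ‖(1 - s + ‖x - q‖ : ℝ) • x + (s : ℝ) • e‖ ≤ R * (1 - s + ‖x - q‖) := hx
  nlinarith [le_abs_self R, norm_nonneg q]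

theorem continuousAt_push {q e x : E} {s : I} (hd : (1 - s : ℝ) + ‖x - q‖ ≠ 0) :
    ContinuousAt (push q e) (s, ↑x) := by
  refine ((IsOpenEmbedding.id.prodMap isOpenEmbedding_coe).continuousAt_iff (x := (s, x))).1 ?_
  have hcont : ContinuousAt (fun z : I × E => 1 - (z.1 : ℝ) + ‖z.2 - q‖) (s, x) := by fun_prop
  have hfin : ContinuousAt (fun z : I × E =>
      z.2 + (z.1 / (1 - z.1 + ‖z.2 - q‖) : ℝ) • e) (s, x) := by fun_prop (disch := exact hd)
  refine (continuous_coe.continuousAt.comp hfin).congr ?_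
  filter_upwards [hcont.eventually_ne hd] with z hz
  exact (if_neg hz).symm

theorem continuous_push [ProperSpace E] (q : E) {e : E} (he : ‖e‖ = 1) :
    Continuous (push q e) := by
  refine continuous_of_isClosed_separating ?_ fun K hK => ?_
  · rintro ⟨s, p⟩ hp
    obtain ⟨x, rfl⟩ := ne_infty_iff_exists.1 fun h : p = ∞ => hp (by rw [h, push, elim_infty])
    exact continuousAt_push (push_coe_ne_infty.1 hp)
  · obtain ⟨R, hR⟩ := hK.isBounded.exists_norm_le
    refine ⟨_, ((isCompact_setOf_norm_smul_add_smul_le q he R).image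
      (continuous_id.prodMap continuous_coe)).isClosed, ?_, ?_⟩
    · rintro ⟨s, p⟩ ⟨y, hy, hyp⟩
      obtain ⟨x, rfl⟩ := ne_infty_iff_exists.1 fun h : p = ∞ =>
        coe_ne_infty y (by rw [hyp, h, push, elim_infty])
      have hd : (1 - s : ℝ) + ‖x - q‖ ≠ 0 := push_coe_ne_infty.1 (hyp ▸ coe_ne_infty y)
      have hy_eq : y = x + (s / (1 - s + ‖x - q‖) : ℝ) • e :=
        coe_injective (hyp.trans (if_neg hd))
      refine ⟨(s, x), ?_, rfl⟩
      have hdpos : 0 ≤ (1 - s : ℝ) + ‖x - q‖ := add_nonneg (sub_nonneg.2 s.2.2) (norm_nonneg _)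
      calc ‖(1 - s + ‖x - q‖ : ℝ) • x + (s : ℝ) • e‖ = ‖(1 - s + ‖x - q‖ : ℝ) • y‖ := by
            rw [hy_eq, smul_add, smul_smul, mul_div_cancel₀ _ hd]
        _ = ‖y‖ * (1 - s + ‖x - q‖) := by rw [norm_smul, Real.norm_of_nonneg hdpos, mul_comm]
        _ ≤ R * (1 - s + ‖x - q‖) := mul_le_mul_of_nonneg_right (hR y hy) hdpos
    · rintro _ ⟨⟨s, x⟩, hx, rfl⟩
      refine push_coe_ne_infty.2 fun hd : (1 - s : ℝ) + ‖x - q‖ = 0 => ?_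
      have hx' : ‖(1 - s + ‖x - q‖ : ℝ) • x + (s : ℝ) • e‖ ≤ R * (1 - s + ‖x - q‖) := hx
      have hs : (s : ℝ) = 1 := by linarith [s.2.2, norm_nonneg (x - q)]
      rw [hd, hs, zero_smul, zero_add, one_smul, he, mul_zero] at hx'
      exact absurd hx' (by norm_num)

variable [ProperSpace E] [Nontrivial E]

theorem exists_homotopic_id_apply_eq_infty (c : OnePoint E) :
    ∃ k : C(OnePoint E, OnePoint E), k.Homotopic (.id _) ∧ k c = ∞ := by
  induction c using OnePoint.rec with
  | infty => exact ⟨.id _, .refl _, rfl⟩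
  | coe q =>
    obtain ⟨e, he⟩ := exists_norm_eq E zero_le_one
    let H : C(I × OnePoint E, OnePoint E) := ⟨push q e, continuous_push q he⟩
    refine ⟨H.curry 1, ContinuousMap.Homotopic.symm ⟨H, fun p => ?_, fun p => rfl⟩, ?_⟩
    · induction p using OnePoint.rec with
      | infty => rfl
      | coe x =>
        have hd : (1 : ℝ) + ‖x - q‖ ≠ 0 := (add_pos_of_pos_of_nonneg one_pos (norm_nonneg _)).ne'
        simp [H, push, hd]
    · simp [H, push]

theorem exists_homotopic_apply_infty (f : C(OnePoint E, OnePoint E)) :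
    ∃ g : C(OnePoint E, OnePoint E), f.Homotopic g ∧ g ∞ = ∞ := by
  obtain ⟨k, hk, hk_infty⟩ := exists_homotopic_id_apply_eq_infty (f ∞)
  exact ⟨k.comp f, .comp hk.symm (.refl f), hk_infty⟩

theorem const_homotopic_const_infty {Z : Type*} [TopologicalSpace Z] (c : OnePoint E) :
    (ContinuousMap.const Z c).Homotopic (.const Z ∞) := by
  obtain ⟨k, hk, hkc⟩ := exists_homotopic_id_apply_eq_infty c
  have h := ContinuousMap.Homotopic.comp hk.symm (.refl (ContinuousMap.const Z c))
  rwa [show k.comp (.const Z c) = .const Z ∞ from ContinuousMap.ext fun _ => hkc] at h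

theorem exists_homeomorph_sphere_apply_infty (n : ℕ) (x₀ : USphere n) :
    ∃ h : OnePoint (Fin n → ℝ) ≃ₜ USphere n, h ∞ = x₀ := by
  obtain ⟨v, hv⟩ := x₀
  have hv1 : ‖v‖ = 1 := mem_sphere_zero_iff_norm.1 hv
  have hv0 : v ≠ 0 := norm_ne_zero_iff.1 (hv1.trans_ne one_ne_zero)
  have : Fact (Module.finrank ℝ (EuclideanSpace ℝ (Fin (n + 1))) = n + 1) := ⟨by simp⟩
  have hfinrank : Module.finrank ℝ (ℝ ∙ v)ᗮ = n :=
    Submodule.finrank_orthogonal_span_singleton hv0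
  obtain ⟨e⟩ := FiniteDimensional.nonempty_continuousLinearEquiv_of_finrank_eq
    ((Module.finrank_fin_fun ℝ).trans hfinrank.symm)
  exact ⟨e.toHomeomorph.onePointCongr.trans (onePointHyperplaneHomeoUnitSphere hv1),
    rfl⟩

end Push

section BlockSmash

open OnePoint

variable {m k : ℕ}

/-- The canonical map exhibiting the compactification of `ℝᵐ⁺ᵏ` as a smash product. -/
noncomputable def blockSmash (m k : ℕ) :
    C(Compactified m × Compactified k, Compactified (m + k)) :=
  .comp (toContinuousMap (Fin.appendHomeomorph (X := ℝ) m k).onePointCongr) smash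

@[simp]
theorem blockSmash_coe_coe (x : Fin m → ℝ) (y : Fin k → ℝ) :
    blockSmash m k (↑x, ↑y) = ↑(Fin.append x y) := by
  rw [blockSmash, ContinuousMap.comp_apply, smash_coe_coe]
  rfl

@[simp]
theorem blockSmash_infty_left (q : Compactified k) : blockSmash m k (∞, q) = ∞ := by
  simp [blockSmash]

@[simp]
theorem blockSmash_infty_right (p : Compactified m) : blockSmash m k (p, ∞) = ∞ := by
  simp [blockSmash]

theorem infty_notMem_unitBox : ∞ ∉ unitBox m :=
  infty_notMem_image_coe

theorem coe_mem_unitBox {x : Fin m → ℝ} : ↑x ∈ unitBox m ↔ ∀ i, |x i| ≤ 1 := by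
  rw [unitBox, coe_injective.mem_set_image, mem_closedBall_zero_iff,
    pi_norm_le_iff_of_nonneg zero_le_one]
  rfl

theorem blockSmash_mem_unitBox {p : Compactified m} {q : Compactified k} :
    blockSmash m k (p, q) ∈ unitBox (m + k) ↔ p ∈ unitBox m ∧ q ∈ unitBox k := by
  induction p using OnePoint.rec <;> induction q using OnePoint.rec <;>
    simp [infty_notMem_unitBox, coe_mem_unitBox, Fin.forall_fin_add]

theorem signLabel_castAdd_blockSmash {p : Compactified m} {q : Compactified k} (hq : q ≠ ∞)
    (i : Fin m) : signLabel (i.castAdd k) (blockSmash m k (p, q)) = signLabel i p := by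
  obtain ⟨y, rfl⟩ := ne_infty_iff_exists.1 hq
  induction p using OnePoint.rec <;> simp [signLabel]

theorem signLabel_natAdd_blockSmash {p : Compactified m} {q : Compactified k} (hp : p ≠ ∞)
    (i : Fin k) : signLabel (i.natAdd m) (blockSmash m k (p, q)) = signLabel i q := by
  obtain ⟨x, rfl⟩ := ne_infty_iff_exists.1 hp
  induction q using OnePoint.rec <;> simp [signLabel]

theorem signCochain_blockSmash_eq_zero {u : ℕ → Compactified m} (w : ℕ → Compactified k)
    {i : Fin m} (hi : u i = u (i + 1)) :
    signCochain (fun j : Fin (m + k + 1) => blockSmash m k (u j, w j)) = 0 := by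
  by_cases h₀ : w i = ∞
  · exact signCochain_eq_zero_of_notMem (k := (i.castAdd k).castSucc)
      (by simp [h₀, infty_notMem_unitBox])
  by_cases h₁ : w (i + 1) = ∞
  · exact signCochain_eq_zero_of_notMem (k := (i.castAdd k).succ)
      (by simp [h₁, infty_notMem_unitBox])
  apply signCochain_eq_zero_of_signLabel_eq (i := i.castAdd k)
  simp only [Fin.val_castSucc, Fin.val_succ, Fin.val_castAdd]
  rw [signLabel_castAdd_blockSmash h₀, signLabel_castAdd_blockSmash h₁, hi]

theorem signCochain_blockSmash_eq_mul {u : ℕ → Compactified m} {w : ℕ → Compactified k}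
    (hu : ∀ j, m ≤ j → u j = u m) (hw : ∀ j ≤ m, w j = w m) :
    signCochain (fun j : Fin (m + k + 1) => blockSmash m k (u j, w j)) =
      signCochain (fun j : Fin (m + 1) => u j) *
        signCochain (fun j : Fin (k + 1) => w (m + j)) := by
  have hbox : (∀ j : Fin (m + k + 1), blockSmash m k (u j, w j) ∈ unitBox (m + k)) ↔
      (∀ j : Fin (m + 1), u j ∈ unitBox m) ∧ ∀ j : Fin (k + 1), w (m + j) ∈ unitBox k := by
    simp only [blockSmash_mem_unitBox]
    refine ⟨fun h => ⟨fun j => (h ⟨j, by lia⟩).1, fun j => (h ⟨m + j, by lia⟩).2⟩,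
      fun h j => ?_⟩
    obtain hj | hj := le_total (j : ℕ) m
    · exact ⟨h.1 ⟨j, by lia⟩, hw j hj ▸ h.2 0⟩
    · exact ⟨hu j hj ▸ h.1 (Fin.last m), by simpa [hj] using h.2 ⟨j - m, by lia⟩⟩
  classical
  simp only [signCochain, hbox, ite_zero_mul_ite_zero]
  refine if_ctx_congr Iff.rfl (fun ⟨hum, hwm⟩ => ?_) fun _ => rfl
  have hu_ne (j : Fin (m + 1)) : u j ≠ ∞ := ne_of_mem_of_not_mem (hum j) infty_notMem_unitBox
  have hw_ne (j : Fin (k + 1)) : w (m + j) ≠ ∞ :=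
    ne_of_mem_of_not_mem (hwm j) infty_notMem_unitBox
  have hum_ne : u m ≠ ∞ := hu_ne (Fin.last m)
  have hwm_ne : w m ≠ ∞ := hw_ne 0
  rw [Fin.prod_univ_add]
  congr 1 <;> refine Finset.prod_congr rfl fun i _ => ?_
  · rw [signLabel_castAdd_blockSmash, signLabel_castAdd_blockSmash]
    · simp
    · simpa [hw _ i.is_lt] using hwm_ne
    · simpa [hw _ i.is_lt.le] using hwm_ne
  · rw [signLabel_natAdd_blockSmash, signLabel_natAdd_blockSmash]
    · simp [add_assoc]
    · simpa [hu _ (by lia : m ≤ m + (i : ℕ) + 1)] using hum_ne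
    · simpa [hu _ (by lia : m ≤ m + (i : ℕ))] using hum_ne

/-- The permutation of `Fin (m + k)` permuting separately the first `m` and the last `k`
elements. -/
def blockPerm (τ : Equiv.Perm (Fin m) × Equiv.Perm (Fin k)) : Equiv.Perm (Fin (m + k)) :=
  finSumFinEquiv.permCongr (Equiv.Perm.sumCongrHom _ _ τ)

@[simp]
theorem blockPerm_castAdd (τ : Equiv.Perm (Fin m) × Equiv.Perm (Fin k)) (i : Fin m) :
    blockPerm τ (i.castAdd k) = (τ.1 i).castAdd k := by
  simp [blockPerm]

@[simp]
theorem blockPerm_natAdd (τ : Equiv.Perm (Fin m) × Equiv.Perm (Fin k)) (i : Fin k) :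
    blockPerm τ (i.natAdd m) = (τ.2 i).natAdd m := by
  simp [blockPerm]

theorem injective_blockPerm : Function.Injective (blockPerm (m := m) (k := k)) :=
  finSumFinEquiv.permCongr.injective.comp Equiv.Perm.sumCongrHom_injective

theorem mem_range_blockPerm {σ : Equiv.Perm (Fin (m + k))}
    (h : ∀ i : Fin m, ∃ j : Fin m, σ.symm (i.castAdd k) = j.castAdd k) :
    σ ∈ Set.range (blockPerm (m := m) (k := k)) := by
  obtain ⟨τ, hτ⟩ := Equiv.Perm.mem_sumCongrHom_range_of_perm_mapsTo_inl
    (σ := finSumFinEquiv.symm.permCongr σ⁻¹) (by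
      rintro _ ⟨i, rfl⟩
      obtain ⟨j, hj⟩ := h i
      exact ⟨j, by simp [hj]⟩)
  refine ⟨τ⁻¹, ?_⟩
  rw [blockPerm, map_inv, hτ]
  ext i
  change (finSumFinEquiv (finSumFinEquiv.symm (σ (finSumFinEquiv (finSumFinEquiv.symm i)))) : ℕ) = _
  simp only [Equiv.apply_symm_apply]

variable {N : ℕ} [NeZero N]

theorem gridSum_blockSmash (a : (Fin m → ZMod N) → Compactified m)
    (b : (Fin k → ZMod N) → Compactified k) :
    gridSum signCochain (fun x : Fin (m + k) → ZMod N =>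
        blockSmash m k (a fun i => x (i.castAdd k), b fun i => x (i.natAdd m))) =
      gridSum signCochain a * gridSum signCochain b := by
  unfold gridSum
  rw [← (Fin.appendEquiv m k).sum_comp, Fintype.sum_mul_sum, Fintype.sum_prod_type]
  refine Finset.sum_congr rfl fun y _ => Finset.sum_congr rfl fun z _ => ?_
  rw [Fintype.sum_mul_sum, ← Fintype.sum_prod_type']
  symm
  refine Fintype.sum_of_injective blockPerm injective_blockPerm _ _ (fun σ hσ => ?_) fun τ => ?_
  · obtain ⟨t, ht⟩ : ∃ t : Fin m, ∀ j : Fin m, σ.symm (t.castAdd k) ≠ j.castAdd k := by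
      contrapose! hσ
      exact mem_range_blockPerm hσ
    refine signCochain_blockSmash_eq_zero (i := t)
      (u := fun j => a fun i => gridVertex (Fin.append y z) σ j (i.castAdd k))
      (fun j => b fun i => gridVertex (Fin.append y z) σ j (i.natAdd m)) (congrArg a ?_)
    funext i
    have hi : (σ (i.castAdd k) : ℕ) ≠ t := fun h =>
      ht i (σ.symm_apply_eq.2 (Fin.ext h.symm))
    simp only [gridVertex, Nat.lt_succ_iff_lt_or_eq, hi, or_false]
  · symm
    refine (signCochain_blockSmash_eq_mul
      (u := fun j => a fun i => gridVertex (Fin.append y z) (blockPerm τ) j (i.castAdd k))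
      (w := fun j => b fun i => gridVertex (Fin.append y z) (blockPerm τ) j (i.natAdd m))
      (fun j hj => congrArg a ?_) (fun j hj => congrArg b ?_)).trans ?_
    · funext i
      simp [gridVertex, (τ.1 i).is_lt.trans_le hj]
    · funext i
      simp [gridVertex, (Nat.le_add_right m _).not_gt, hj.trans (Nat.le_add_right m _)]
    · congr 1 <;> simp only [gridVertex, Fin.append_left, Fin.append_right, blockPerm_castAdd,
        blockPerm_natAdd, Fin.val_castAdd, Fin.val_natAdd, add_lt_add_iff_left] <;> rfl

theorem blockSmash_comp_prodMap_homotopic {f g : C(Compactified m, Compactified m)}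
    (hf : f ∞ = ∞) (hg : g ∞ = ∞) :
    ((blockSmash m m).comp (g.prodMap f)).Homotopic
      ((blockSmash m m).comp ((g.comp f).prodMap (.id _))) := by
  rw [blockSmash, ContinuousMap.comp_assoc, ContinuousMap.comp_assoc]
  exact .comp (.refl _) (smash_comp_prodMap_homotopic hf hg)

end BlockSmash

section TorusDegree

variable {m : ℕ}

/-- The standard `m`-torus. -/
abbrev Torus (m : ℕ) : Type := Fin m → UnitAddCircle

/-- The embedding of the discrete torus `(ℤ/N)ᵐ` as the grid of mesh `1/N` in the torus. -/
noncomputable def gridPoint {N : ℕ} [NeZero N] (x : Fin m → ZMod N) : Torus m :=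
  fun i => ZMod.toAddCircle (x i)

/-- The mod 2 degree of a map from the torus to the sphere, obtained by evaluating the sign cochain
on the triangulations of the torus with `2M + 2` vertices along each circle. The germ at infinity
of these values replaces their eventually constant value. -/
noncomputable def torusDegree (f : C(Torus m, Compactified m)) : Germ (atTop : Filter ℕ) (ZMod 2) :=
  ↑fun M : ℕ => gridSum signCochain fun x : Fin m → ZMod (2 * M + 2) => f (gridPoint x)

theorem norm_toAddCircle_one_le (N : ℕ) [NeZero N] :
    ‖(ZMod.toAddCircle (1 : ZMod N) : UnitAddCircle)‖ ≤ 1 / N := by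
  have h := ZMod.toAddCircle_natCast (N := N) 1
  rw [Nat.cast_one] at h
  rw [h, Nat.cast_one, UnitAddCircle.norm_eq]
  simpa using round_le (1 / N : ℝ) 0

theorem dist_gridPoint_gridVertex_le {N : ℕ} [NeZero N] (x : Fin m → ZMod N)
    (σ : Equiv.Perm (Fin m)) (j k : ℕ) :
    dist (gridPoint (gridVertex x σ j)) (gridPoint (gridVertex x σ k)) ≤ 1 / N := by
  refine (dist_pi_le_iff (by positivity)).2 fun i => ?_
  have h := norm_toAddCircle_one_le N
  simp only [gridPoint, gridVertex, map_add, dist_add_left]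
  split_ifs
  · simp
  · rwa [map_zero, dist_zero_right]
  · rwa [map_zero, dist_zero_left]
  · simp

theorem gridPoint_cons {N : ℕ} [NeZero N] (c : ZMod N) (x : Fin m → ZMod N) :
    gridPoint (Fin.cons c x : Fin (m + 1) → ZMod N) =
      Fin.cons (ZMod.toAddCircle c) (gridPoint x) := by
  funext i
  cases i using Fin.cases <;> rfl

theorem eventually_gridSum_cons_eq (F : C(Torus (m + 1), Compactified m)) :
    ∀ᶠ N : ℕ in atTop, ∀ [NeZero N] (c : ZMod N),
      gridSum signCochain (fun x : Fin m → ZMod N => F (gridPoint (Fin.cons c x))) =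
        gridSum signCochain fun x => F (gridPoint (Fin.cons (0 : ZMod N) x)) := by
  obtain ⟨δ, hδ, hF⟩ := exists_pos_sum_signCochain_succAbove F
  have hmesh : ∀ᶠ N : ℕ in atTop, 1 / (N : ℝ) < δ :=
    tendsto_one_div_atTop_nhds_zero_nat.eventually_lt_const hδ
  filter_upwards [hmesh] with N hN _ c
  obtain ⟨c, rfl⟩ := ZMod.natCast_zmod_surjective c
  induction c with
  | zero => rw [Nat.cast_zero]
  | succ c ih =>
    rw [← ih, Nat.cast_succ]
    refine gridSum_cons_add_one signCochain (fun x : Fin (m + 1) → ZMod N => F (gridPoint x))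
      (c : ZMod N) fun x σ => ?_
    exact hF (fun l => gridPoint (gridVertex (Fin.cons (c : ZMod N) x) σ l))
      fun _ _ => (dist_gridPoint_gridVertex_le _ _ _ _).trans_lt hN

theorem norm_unitAddCircle_le (z : UnitAddCircle) : ‖z‖ ≤ 1 / 2 := by
  simpa using AddCircle.norm_le_half_period 1 (x := z) one_ne_zero

/-- The map folding the circle onto the unit interval. -/
noncomputable def fold : C(UnitAddCircle, unitInterval) where
  toFun z := ⟨2 * ‖z‖, by positivity, by linarith [norm_unitAddCircle_le z]⟩

theorem norm_toAddCircle_half (M : ℕ) :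
    ‖(ZMod.toAddCircle ((M + 1 : ℕ) : ZMod (2 * M + 2)) : UnitAddCircle)‖ = 1 / 2 := by
  have hcoe :
      ZMod.toAddCircle ((M + 1 : ℕ) : ZMod (2 * M + 2)) = ((1 / 2 : ℝ) : UnitAddCircle) := by
    rw [ZMod.toAddCircle_natCast]
    congr 1
    push_cast
    field_simp
  rw [hcoe, (AddCircle.norm_coe_eq_abs_iff 1 one_ne_zero).2 (by norm_num)]
  norm_num

theorem torusDegree_congr {f g : C(Torus m, Compactified m)} (h : f.Homotopic g) :
    torusDegree f = torusDegree g := by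
  obtain ⟨H⟩ := h
  let F : C(Torus (m + 1), Compactified m) :=
    ⟨fun z => H (fold (z 0), Fin.tail z), by unfold Fin.tail; fun_prop⟩
  have hlarge : Tendsto (fun M : ℕ => 2 * M + 2) atTop atTop :=
    tendsto_atTop_mono (fun M => (by lia : M ≤ 2 * M + 2)) tendsto_id
  refine Germ.coe_eq.2 ((hlarge.eventually (eventually_gridSum_cons_eq F)).mono fun M hM => ?_)
  have hzero : fold 0 = 0 := Subtype.ext (by simp [fold])
  have hone : fold (ZMod.toAddCircle ((M + 1 : ℕ) : ZMod (2 * M + 2))) = 1 :=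
    Subtype.ext (by simp [fold, norm_toAddCircle_half, -Nat.cast_add])
  simpa [F, gridPoint_cons, hzero, hone, -Nat.cast_add] using
    (hM ((M + 1 : ℕ) : ZMod (2 * M + 2))).symm

theorem update_gridPoint_add_single {N : ℕ} [NeZero N] (x : Fin m → ZMod N) (i : Fin m)
    (d : ZMod N) (w : UnitAddCircle) :
    Function.update (gridPoint (x + Pi.single i d)) i w = Function.update (gridPoint x) i w := by
  funext j
  obtain rfl | hj := eq_or_ne j i
  · simp
  · simp [gridPoint, hj]

theorem torusDegree_eq_zero_of_update {f : C(Torus m, Compactified m)} {i : Fin m}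
    (hf : ∀ z, f (Function.update z i 0) = f z) : torusDegree f = 0 := by
  refine congrArg _ (funext fun M => ?_)
  refine gridSum_eq_zero_of_periodic signCochain
    (d := Pi.single i ((M + 1 : ℕ) : ZMod (2 * M + 2))) ?_ ?_ fun x => ?_
  · rw [Ne, Pi.single_eq_zero_iff, ZMod.natCast_eq_zero_iff]
    exact Nat.not_dvd_of_pos_of_lt (by lia) (by lia)
  · rw [← Pi.single_add, Pi.single_eq_zero_iff, ← Nat.cast_add, ZMod.natCast_eq_zero_iff]
    exact dvd_of_eq (by ring)
  · rw [← hf, update_gridPoint_add_single, hf]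

/-- The self-map of the circle translating each point by `s` times its distance to `0`. For `s = 1`
it collapses the half circle `[1/2, 1]`, for `s = -1` it collapses `[0, 1/2]`. -/
noncomputable def slide (s : ℝ) (z : UnitAddCircle) : UnitAddCircle :=
  z + ((s * ‖z‖ : ℝ) : UnitAddCircle)

@[simp]
theorem slide_zero (z : UnitAddCircle) : slide 0 z = z := by
  simp [slide]

@[fun_prop]
theorem continuous_slide : Continuous fun p : ℝ × UnitAddCircle => slide p.1 p.2 :=
  continuous_snd.add ((AddCircle.continuous_mk' 1).comp (by fun_prop))

theorem slide_neg_one_coe {t : ℝ} (h₀ : 0 ≤ t) (h₁ : t ≤ 1 / 2) :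
    slide (-1) (t : UnitAddCircle) = 0 := by
  have hnorm : ‖(t : UnitAddCircle)‖ = t := by
    rw [(AddCircle.norm_coe_eq_abs_iff 1 one_ne_zero).2] <;> rw [abs_of_nonneg h₀]
    simpa using h₁
  simp [slide, hnorm]

theorem slide_one_coe {t : ℝ} (h₀ : 1 / 2 ≤ t) (h₁ : t ≤ 1) : slide 1 (t : UnitAddCircle) = 0 := by
  have hneg : (t : UnitAddCircle) = -((1 - t : ℝ) : UnitAddCircle) := by
    rw [AddCircle.coe_sub, AddCircle.coe_period, zero_sub, neg_neg]
  have h := slide_neg_one_coe (sub_nonneg.2 h₁) (by linarith)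
  rw [slide] at h ⊢
  rw [hneg, norm_neg, ← neg_eq_zero, neg_add, neg_neg]
  simpa using h

/-- Each edge of the grid lies in one of the two half circles. -/
theorem slide_toAddCircle_eq_zero {M : ℕ} (c : ZMod (2 * M + 2)) :
    ∃ s ∈ ({-1, 1} : Set ℝ), slide s (ZMod.toAddCircle c) = 0 ∧
      slide s (ZMod.toAddCircle (c + 1)) = 0 := by
  have hN : (0 : ℝ) < (2 * M + 2 : ℕ) := by positivity
  have hc : c.val < 2 * M + 2 := c.val_lt
  have hcast : c + 1 = ((c.val + 1 : ℕ) : ZMod (2 * M + 2)) := by simp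
  rw [hcast, ZMod.toAddCircle_natCast, ZMod.toAddCircle_apply]
  obtain h | h := le_or_gt (c.val + 1) (M + 1)
  · refine ⟨-1, by simp, slide_neg_one_coe (by positivity) ?_, slide_neg_one_coe (by positivity) ?_⟩
      <;> rw [div_le_div_iff₀ hN two_pos] <;> norm_cast <;> lia
  · refine ⟨1, by simp, slide_one_coe ?_ ?_, slide_one_coe ?_ ?_⟩
      <;> first | rw [div_le_div_iff₀ two_pos hN] | rw [div_le_one hN]
    all_goals norm_cast
    all_goals lia

/-- The self-map of the torus applying `slide s` to the coordinate `i`. -/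
noncomputable def slideCoord (i : Fin m) (s : ℝ) : C(Torus m, Torus m) where
  toFun z := Function.update z i (slide s (z i))
  continuous_toFun := continuous_id.update i (by fun_prop)

theorem slideCoord_homotopic_id (i : Fin m) (s : ℝ) :
    (slideCoord i s).Homotopic (.id (Torus m)) :=
  ⟨{toFun p := Function.update p.2 i (slide ((1 - p.1) * s) (p.2 i))
    continuous_toFun := continuous_snd.update i (by fun_prop)
    map_zero_left z := by simp [slideCoord]
    map_one_left z := by simp }⟩

/-- The self-map of the torus setting the coordinate `i` to `0`. -/
def pinCoord (i : Fin m) : C(Torus m, Torus m) where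
  toFun z := Function.update z i 0

theorem slideCoord_gridVertex (i : Fin m) {M : ℕ} (x : Fin m → ZMod (2 * M + 2))
    (σ : Equiv.Perm (Fin m)) :
    ∃ s ∈ ({-1, 1} : Set ℝ), ∀ k, slideCoord i s (gridPoint (gridVertex x σ k)) =
      pinCoord i (gridPoint (gridVertex x σ k)) := by
  obtain ⟨s, hs, h₀, h₁⟩ := slide_toAddCircle_eq_zero (x i)
  refine ⟨s, hs, fun k => congrArg (Function.update _ i) ?_⟩
  simp only [gridPoint, gridVertex]
  split_ifs
  exacts [h₁, by rwa [add_zero]]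

variable (H : C(Torus m × Torus m, Compactified m)) (i : Fin m)

/-- On each simplex of the grid one of the two slides agrees with `pinCoord`, so the contributions
cancel in pairs. -/
theorem torusDegree_slideCoord_add_torusDegree_pinCoord :
    torusDegree (H.comp ((slideCoord i 1).prodMk (slideCoord i (-1)))) +
        torusDegree (H.comp ((pinCoord i).prodMk (pinCoord i))) =
      torusDegree (H.comp ((slideCoord i 1).prodMk (pinCoord i))) +
        torusDegree (H.comp ((pinCoord i).prodMk (slideCoord i (-1)))) := by
  refine congrArg _ (funext fun M => ?_)
  simp only [gridSum, ← Finset.sum_add_distrib]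
  refine Finset.sum_congr rfl fun x _ => Finset.sum_congr rfl fun σ _ => ?_
  obtain ⟨s, rfl | rfl, hs⟩ := slideCoord_gridVertex i x σ
  · simp only [ContinuousMap.comp_apply, ContinuousMap.prod_eval, hs]
  · simp only [ContinuousMap.comp_apply, ContinuousMap.prod_eval, hs]
    exact add_comm _ _

theorem torusDegree_comp_diag :
    torusDegree (H.comp (.prodMk (.id _) (.id _))) =
      torusDegree (H.comp (.prodMk (.id _) (pinCoord i))) +
        torusDegree (H.comp (.prodMk (pinCoord i) (.id _))) := by
  have hcongr {a a' b b' : C(Torus m, Torus m)} (ha : a.Homotopic a') (hb : b.Homotopic b') :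
      torusDegree (H.comp (a.prodMk b)) = torusDegree (H.comp (a'.prodMk b')) :=
    torusDegree_congr (.comp (.refl H) (ha.prodMk hb))
  have hpin : torusDegree (H.comp ((pinCoord i).prodMk (pinCoord i))) = 0 :=
    torusDegree_eq_zero_of_update (i := i) fun z => by simp [pinCoord]
  have h := torusDegree_slideCoord_add_torusDegree_pinCoord H i
  rwa [hpin, add_zero, hcongr (slideCoord_homotopic_id i 1) (slideCoord_homotopic_id i (-1)),
    hcongr (slideCoord_homotopic_id i 1) (.refl _),
    hcongr (.refl _) (slideCoord_homotopic_id i (-1))] at h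

end TorusDegree

section TorusCollapse

open OnePoint Real

variable {m k : ℕ}

/-- The parametrization of the circle minus `0` by the real line. -/
noncomputable def circleChart (s : ℝ) : UnitAddCircle :=
  ((arctan s / π + 1 / 2 : ℝ) : UnitAddCircle)

theorem arctan_div_pi_add_half_mem_Ioo (s : ℝ) : arctan s / π + 1 / 2 ∈ Set.Ioo (0 : ℝ) 1 := by
  obtain ⟨h₀, h₁⟩ := arctan_mem_Ioo s
  constructor
  · have : -(1 / 2) < arctan s / π := by rw [lt_div_iff₀ pi_pos]; linarith
    linarith
  · have : arctan s / π < 1 / 2 := by rw [div_lt_iff₀ pi_pos]; linarith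
    linarith

theorem isOpenEmbedding_circleChart : IsOpenEmbedding circleChart := by
  refine .of_continuous_injective_isOpenMap ?_ ?_ ?_
  · exact (AddCircle.continuous_mk' 1).comp (by fun_prop)
  · intro s t h
    have := (AddCircle.coe_eq_coe_iff_of_mem_Ico (p := 1) (a := 0)
      (by simpa using Set.Ioo_subset_Ico_self (arctan_div_pi_add_half_mem_Ioo s))
      (by simpa using Set.Ioo_subset_Ico_self (arctan_div_pi_add_half_mem_Ioo t))).1 h
    exact arctan_injective ((div_left_inj' pi_ne_zero).1 (add_right_cancel this))
  · exact QuotientAddGroup.isOpenMap_coe.comp ((Homeomorph.addRight _).isOpenMap.comp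
      ((Homeomorph.mulRight₀ π⁻¹ (by positivity)).isOpenMap.comp
        (tanPartialHomeomorph.symm.isOpenEmbedding rfl).isOpenMap))

theorem circleChart_tan {t : ℝ} (h₀ : 0 < t) (h₁ : t < 1) :
    circleChart (tan (π * (t - 1 / 2))) = (t : UnitAddCircle) := by
  rw [circleChart, arctan_tan (by nlinarith [pi_pos]) (by nlinarith [pi_pos]),
    mul_div_cancel_left₀ _ pi_ne_zero, sub_add_cancel]

theorem circleChart_ne_zero (s : ℝ) : circleChart s ≠ 0 := by
  have h := arctan_div_pi_add_half_mem_Ioo s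
  intro h0
  have := (AddCircle.coe_eq_coe_iff_of_mem_Ico (p := (1 : ℝ)) (a := 0)
    (by simpa using Set.Ioo_subset_Ico_self h) (by simp)).1 (h0.trans (AddCircle.coe_zero 1).symm)
  exact h.1.ne' this

theorem exists_circleChart_eq {z : UnitAddCircle} (hz : z ≠ 0) : ∃ s, circleChart s = z := by
  obtain ⟨t, ⟨h₀, h₁⟩, rfl⟩ := (AddCircle.coe_image_Ico_eq (1 : ℝ) 0).ge (Set.mem_univ z)
  have ht : t ≠ 0 := by rintro rfl; exact hz (AddCircle.coe_zero 1)
  exact ⟨_, circleChart_tan (lt_of_le_of_ne h₀ ht.symm) (by simpa using h₁)⟩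

theorem eq_circleChart_or_exists_eq_zero (z : Torus m) :
    (∃ x : Fin m → ℝ, z = fun i => circleChart (x i)) ∨ ∃ i, z i = 0 := by
  by_cases h : ∃ i, z i = 0
  · exact .inr h
  · choose x hx using fun i => exists_circleChart_eq (not_exists.1 h i)
    exact .inl ⟨x, funext fun i => (hx i).symm⟩

/-- The map from the torus to the sphere collapsing the points with a vanishing coordinate. -/
noncomputable def torusCollapse (m : ℕ) : C(Torus m, Compactified m) where
  toFun := collapse (Pi.map fun _ => circleChart)
  continuous_toFun := continuous_collapse (.piMap fun _ => isOpenEmbedding_circleChart)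

theorem torusCollapse_circleChart (x : Fin m → ℝ) :
    torusCollapse m (fun i => circleChart (x i)) = ↑x :=
  collapse_apply (.piMap fun _ => isOpenEmbedding_circleChart.injective) x

theorem torusCollapse_eq_infty {z : Torus m} {i : Fin m} (hi : z i = 0) :
    torusCollapse m z = ∞ := by
  refine collapse_of_notMem_range ?_
  rintro ⟨x, rfl⟩
  exact circleChart_ne_zero _ hi

theorem torusCollapse_append (z : Torus m) (w : Torus k) :
    torusCollapse (m + k) (Fin.append z w) =
      blockSmash m k (torusCollapse m z, torusCollapse k w) := by
  obtain ⟨x, rfl⟩ | ⟨i, hi⟩ := eq_circleChart_or_exists_eq_zero z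
  swap
  · rw [torusCollapse_eq_infty hi, blockSmash_infty_left]
    exact torusCollapse_eq_infty (i := i.castAdd k) (by rwa [Fin.append_left])
  obtain ⟨y, rfl⟩ | ⟨i, hi⟩ := eq_circleChart_or_exists_eq_zero w
  swap
  · rw [torusCollapse_eq_infty hi, blockSmash_infty_right]
    exact torusCollapse_eq_infty (i := i.natAdd m) (by rwa [Fin.append_right])
  rw [torusCollapse_circleChart, torusCollapse_circleChart, blockSmash_coe_coe,
    ← torusCollapse_circleChart]
  congr 1
  funext i
  cases i using Fin.addCases <;> simp

theorem torusDegree_eq_mul {f : C(Torus m, Compactified m)} {g : C(Torus k, Compactified k)}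
    {h : C(Torus (m + k), Compactified (m + k))}
    (hfg : ∀ z w, h (Fin.append z w) = blockSmash m k (f z, g w)) :
    torusDegree h = torusDegree f * torusDegree g := by
  refine congrArg _ (funext fun M => ?_)
  refine Eq.trans ?_ (gridSum_blockSmash _ _)
  congr 1
  funext x
  rw [← Fin.append_castAdd_natAdd (f := gridPoint x), hfg]
  rfl

theorem torusCollapse_one_coe {t : ℝ} (h₀ : 0 < t) (h₁ : t < 1) :
    torusCollapse 1 (fun _ => (t : UnitAddCircle)) =
      ↑(fun _ => tan (π * (t - 1 / 2)) : Fin 1 → ℝ) := by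
  rw [← torusCollapse_circleChart]
  simp only [circleChart_tan h₀ h₁]

theorem signLabel_torusCollapse_one_coe {t : ℝ} (h₀ : 0 < t) (h₁ : t < 1) :
    signLabel 0 (torusCollapse 1 fun _ => (t : UnitAddCircle)) = if 1 / 2 ≤ t then 1 else 0 := by
  have htan : 0 ≤ tan (π * (t - 1 / 2)) ↔ 1 / 2 ≤ t := by
    refine ⟨fun h => ?_, fun h =>
      tan_nonneg_of_nonneg_of_le_pi_div_two (by nlinarith [pi_pos]) (by nlinarith [pi_pos])⟩
    contrapose! h
    exact tan_neg_of_neg_of_pi_div_two_lt (by nlinarith [pi_pos]) (by nlinarith [pi_pos])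
  simp only [torusCollapse_one_coe h₀ h₁, signLabel, OnePoint.elim_some, htan]

theorem torusCollapse_one_coe_mem_unitBox {t : ℝ} (h₀ : 1 / 4 ≤ t) (h₁ : t ≤ 3 / 4) :
    torusCollapse 1 (fun _ => (t : UnitAddCircle)) ∈ unitBox 1 := by
  rw [torusCollapse_one_coe (by linarith) (by linarith), coe_mem_unitBox]
  intro _
  have h : Set.Icc (-(π / 4)) (π / 4) ⊆ Set.Ioo (-(π / 2)) (π / 2) :=
    Set.Icc_subset_Ioo (by linarith [pi_pos]) (by linarith [pi_pos])
  have hmono := strictMonoOn_tan.monotoneOn.mono h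
  have hmem : π * (t - 1 / 2) ∈ Set.Icc (-(π / 4)) (π / 4) := by
    constructor <;> nlinarith [pi_pos]
  have hpi : -(π / 4) ≤ π / 4 := by linarith [pi_pos]
  have hlow := hmono (Set.left_mem_Icc.2 hpi) hmem hmem.1
  have hhigh := hmono hmem (Set.right_mem_Icc.2 hpi) hmem.2
  rw [tan_neg, tan_pi_div_four] at hlow
  rw [tan_pi_div_four] at hhigh
  exact abs_le.2 ⟨hlow, hhigh⟩

/-- The image in `Compactified 1` of the vertex `v / (2M + 2)` of the subdivided circle. -/
noncomputable def collapsedVertex (M v : ℕ) : Compactified 1 :=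
  torusCollapse 1 fun _ => ((v / (2 * M + 2 : ℕ) : ℝ) : UnitAddCircle)

variable {M v : ℕ}

theorem collapsedVertex_zero (M : ℕ) : collapsedVertex M 0 = ∞ :=
  torusCollapse_eq_infty (i := 0) (by simp)

theorem collapsedVertex_last (M : ℕ) : collapsedVertex M (2 * M + 2) = ∞ :=
  torusCollapse_eq_infty (i := 0) (by rw [div_self (by positivity), AddCircle.coe_period])

theorem signLabel_collapsedVertex (h₀ : v ≠ 0) (h₁ : v < 2 * M + 2) :
    signLabel 0 (collapsedVertex M v) = if M + 1 ≤ v then 1 else 0 := by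
  have hN : (0 : ℝ) < (2 * M + 2 : ℕ) := by positivity
  have hhalf : 1 / 2 ≤ (v / (2 * M + 2 : ℕ) : ℝ) ↔ M + 1 ≤ v := by
    rw [div_le_div_iff₀ two_pos hN]
    norm_cast
    lia
  rw [collapsedVertex, signLabel_torusCollapse_one_coe (by positivity)
    ((div_lt_one hN).2 (mod_cast h₁))]
  simp only [hhalf]

theorem collapsedVertex_mem_unitBox (h₀ : 2 * M + 2 ≤ 4 * v) (h₁ : 4 * v ≤ 3 * (2 * M + 2)) :
    collapsedVertex M v ∈ unitBox 1 := by
  have hN : (0 : ℝ) < (2 * M + 2 : ℕ) := by positivity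
  apply torusCollapse_one_coe_mem_unitBox
  · rw [div_le_div_iff₀ four_pos hN]
    norm_cast
    lia
  · rw [div_le_div_iff₀ hN four_pos]
    norm_cast
    lia

theorem signCochain_collapsedVertex (hM : M ≠ 0) (hv : v < 2 * M + 2) :
    signCochain (fun k : Fin 2 => collapsedVertex M (v + k)) = if v = M then 1 else 0 := by
  by_cases h₀ : v = 0
  · rw [if_neg (by lia)]
    refine signCochain_eq_zero_of_notMem (k := 0) ?_
    simp [h₀, collapsedVertex_zero, infty_notMem_unitBox]
  by_cases h₁ : v = 2 * M + 1
  · rw [if_neg (by lia)]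
    refine signCochain_eq_zero_of_notMem (k := 1) ?_
    simp [h₁, collapsedVertex_last, infty_notMem_unitBox]
  have hlabel (k : Fin 2) :
      signLabel 0 (collapsedVertex M (v + k)) = if M + 1 ≤ v + k then 1 else 0 :=
    signLabel_collapsedVertex (by lia) (by lia)
  split_ifs with h
  · rw [signCochain, if_pos fun k => collapsedVertex_mem_unitBox (by lia) (by lia)]
    rw [Fin.prod_univ_one, hlabel, hlabel]
    simp [h]
  · refine signCochain_eq_zero_of_signLabel_eq (i := 0) ?_
    rw [hlabel, hlabel]
    congr 1
    exact propext (by simp only [Fin.val_castSucc, Fin.val_succ]; lia)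

theorem torusDegree_torusCollapse_one : torusDegree (torusCollapse 1) = 1 := by
  refine Germ.coe_eq.2 ((eventually_ne_atTop 0).mono fun M hM => ?_)
  have hvertex (c : ZMod (2 * M + 2)) (k : Fin 2) :
      torusCollapse 1 (gridPoint (gridVertex (fun _ => c) 1 k)) =
        collapsedVertex M (c.val + k) := by
    congr 1
    funext i
    rw [← ZMod.toAddCircle_natCast, gridPoint, gridVertex]
    congr 1
    fin_cases k <;> simp
  simp only [gridSum]
  rw [← (Equiv.funUnique (Fin 1) (ZMod (2 * M + 2))).symm.sum_comp]
  have hedge (c : ZMod (2 * M + 2)) :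
      ∑ σ : Equiv.Perm (Fin 1), signCochain (fun k : Fin 2 => torusCollapse 1 (gridPoint
        (gridVertex ((Equiv.funUnique (Fin 1) (ZMod (2 * M + 2))).symm c) σ k))) =
        if c.val = M then 1 else 0 := by
    rw [Fintype.sum_unique, ← signCochain_collapsedVertex hM c.val_lt]
    exact congrArg signCochain (funext fun k => hvertex c k)
  have hval (c : ZMod (2 * M + 2)) : c.val = M ↔ c = M :=
    ⟨fun h => (ZMod.natCast_zmod_val c).symm.trans (congrArg _ h),
      fun h => h ▸ ZMod.val_cast_of_lt (by lia)⟩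
  simp only [hedge, hval, Finset.sum_ite_eq', Finset.mem_univ, if_true]

theorem torusDegree_torusCollapse (m : ℕ) : torusDegree (torusCollapse m) = 1 := by
  induction m with
  | zero =>
    refine congrArg _ (funext fun M => ?_)
    have hbox (z : Torus 0) : torusCollapse 0 z ∈ unitBox 0 := by
      obtain ⟨x, rfl⟩ | ⟨i, -⟩ := eq_circleChart_or_exists_eq_zero z
      · rw [torusCollapse_circleChart, coe_mem_unitBox]
        exact fun i => i.elim0
      · exact i.elim0
    simp [gridSum, signCochain, hbox]
  | succ m ih =>
    rw [torusDegree_eq_mul torusCollapse_append, ih, torusDegree_torusCollapse_one, one_mul]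

end TorusCollapse

section Bidegree

open OnePoint

variable {m k n : ℕ}

/-- The mod 2 degree of a self-map of the compactification of `ℝⁿ`. -/
noncomputable def sphereDegree (f : C(Compactified n, Compactified n)) :
    Germ (atTop : Filter ℕ) (ZMod 2) :=
  torusDegree (f.comp (torusCollapse n))

/-- The map from a torus to the product of two spheres collapsing both blocks of coordinates. -/
noncomputable def prodCollapse (m k : ℕ) : C(Torus (m + k), Compactified m × Compactified k) :=
  ((torusCollapse m).prodMap (torusCollapse k)).comp
    (toContinuousMap (Fin.appendHomeomorph (X := UnitAddCircle) m k).symm)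

/-- The mod 2 degree of a map from a product of two spheres to the sphere of the same dimension. -/
noncomputable def productDegree
    (f : C(Compactified m × Compactified k, Compactified (m + k))) :
    Germ (atTop : Filter ℕ) (ZMod 2) :=
  torusDegree (f.comp (prodCollapse m k))

theorem prodCollapse_apply (z : Torus (m + k)) :
    prodCollapse m k z = (torusCollapse m fun i => z (i.castAdd k),
      torusCollapse k fun i => z (i.natAdd m)) :=
  rfl

theorem sphereDegree_congr {f g : C(Compactified n, Compactified n)} (h : f.Homotopic g) :
    sphereDegree f = sphereDegree g :=
  torusDegree_congr (h.comp (.refl _))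

theorem productDegree_congr {f g : C(Compactified m × Compactified k, Compactified (m + k))}
    (h : f.Homotopic g) : productDegree f = productDegree g :=
  torusDegree_congr (h.comp (.refl _))

theorem sphereDegree_id : sphereDegree (.id (Compactified n)) = 1 :=
  torusDegree_torusCollapse n

theorem sphereDegree_const [NeZero n] (q : Compactified n) : sphereDegree (.const _ q) = 0 :=
  torusDegree_eq_zero_of_update (i := 0) fun _ => rfl

theorem productDegree_const [NeZero m] (q : Compactified (m + k)) :
    productDegree (.const (Compactified m × Compactified k) q) = 0 :=
  torusDegree_eq_zero_of_update (i := (0 : Fin m).castAdd k) fun _ => rfl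

theorem productDegree_blockSmash_comp_prodMap (f : C(Compactified m, Compactified m))
    (g : C(Compactified k, Compactified k)) :
    productDegree ((blockSmash m k).comp (f.prodMap g)) = sphereDegree f * sphereDegree g :=
  torusDegree_eq_mul fun z w => by
    simp [prodCollapse_apply]

theorem torusDegree_comp_perm (f : C(Torus m, Compactified m)) {g : C(Torus m, Compactified m)}
    (e : Equiv.Perm (Fin m)) (h : ∀ z, g z = f (z ∘ e)) : torusDegree g = torusDegree f := by
  refine congrArg Germ.ofFun (funext fun M => ?_)
  simp only [h]
  exact gridSum_comp_perm signCochain (fun x => f (gridPoint x)) e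

theorem productDegree_blockSmash_comp_prodMap_swap (f g : C(Compactified n, Compactified n)) :
    productDegree ((blockSmash n n).comp ((f.prodMap g).comp .prodSwap)) =
      sphereDegree f * sphereDegree g := by
  rw [← productDegree_blockSmash_comp_prodMap]
  refine torusDegree_comp_perm _ finAddFlip fun z => ?_
  simp only [ContinuousMap.comp_apply, ContinuousMap.prodSwap_apply, prodCollapse_apply,
    Function.comp_apply, finAddFlip_apply_castAdd, finAddFlip_apply_natAdd]

theorem sphereDegree_comp [NeZero n] (g f : C(Compactified n, Compactified n)) :
    sphereDegree (g.comp f) = sphereDegree g * sphereDegree f := by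
  obtain ⟨f', hf, hf_infty⟩ := exists_homotopic_apply_infty f
  obtain ⟨g', hg, hg_infty⟩ := exists_homotopic_apply_infty g
  rw [sphereDegree_congr hf, sphereDegree_congr hg, sphereDegree_congr (hg.comp hf),
    ← mul_one (sphereDegree (g'.comp f')), ← sphereDegree_id,
    ← productDegree_blockSmash_comp_prodMap, ← productDegree_blockSmash_comp_prodMap]
  exact productDegree_congr (blockSmash_comp_prodMap_homotopic hf_infty hg_infty).symm

theorem torusDegree_comp_diag_comp {P : Type*} [TopologicalSpace P] {q : C(Torus m, P)}
    {r : C(P, P)} {i : Fin m} (hr : ∀ z, q (pinCoord i z) = r (q z))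
    (Φ : C(P × P, Compactified m)) :
    torusDegree ((Φ.comp (.prodMk (.id _) (.id _))).comp q) =
      torusDegree ((Φ.comp (.prodMk (.id _) r)).comp q) +
        torusDegree ((Φ.comp (.prodMk r (.id _))).comp q) := by
  have hpin : q.comp (pinCoord i) = r.comp q := ContinuousMap.ext hr
  change torusDegree (Φ.comp (q.prodMk q)) = torusDegree (Φ.comp (q.prodMk (r.comp q))) +
    torusDegree (Φ.comp ((r.comp q).prodMk q))
  rw [← hpin]
  exact torusDegree_comp_diag (Φ.comp (q.prodMap q)) i

/-- The inclusions of the two axes into the product of the sphere with itself. -/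
def axis : Fin 2 → C(Compactified n, Compactified n × Compactified n) :=
  ![.prodMk (.id _) (.const _ ∞), .prodMk (.const _ ∞) (.id _)]

/-- The mod 2 degrees of the restrictions to the two axes of a binary operation on the sphere. -/
noncomputable def bidegree (F : C(Compactified n × Compactified n, Compactified n)) (j : Fin 2) :
    Germ (atTop : Filter ℕ) (ZMod 2) :=
  sphereDegree (F.comp (axis j))

theorem sphereDegree_comp_prodMk [NeZero n] (F : C(Compactified n × Compactified n, Compactified n))
    (f g : C(Compactified n, Compactified n)) :
    sphereDegree (F.comp (f.prodMk g)) =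
      bidegree F 0 * sphereDegree f + bidegree F 1 * sphereDegree g := by
  have hpin (z : Torus n) : torusCollapse n (pinCoord 0 z) = ∞ :=
    torusCollapse_eq_infty (i := 0) (by simp [pinCoord])
  have h := torusDegree_comp_diag_comp (r := .const _ ∞) hpin (F.comp (f.prodMap g))
  have h₀ : (F.comp (f.prodMk (.const _ (g ∞)))).Homotopic ((F.comp (axis 0)).comp f) :=
    ContinuousMap.Homotopic.comp (.refl F)
      (.prodMk (.refl f) (const_homotopic_const_infty (g ∞)))
  have h₁ : (F.comp (.prodMk (.const _ (f ∞)) g)).Homotopic ((F.comp (axis 1)).comp g) :=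
    ContinuousMap.Homotopic.comp (.refl F)
      (.prodMk (const_homotopic_const_infty (f ∞)) (.refl g))
  rw [bidegree, bidegree, ← sphereDegree_comp, ← sphereDegree_comp, ← sphereDegree_congr h₀,
    ← sphereDegree_congr h₁]
  exact h

theorem productDegree_blockSmash_comp_prodMk_const [NeZero m] [NeZero k]
    (F : C(Compactified m × Compactified k, Compactified m)) (q : Compactified k) :
    productDegree ((blockSmash m k).comp (F.prodMk (.const _ q))) = 0 := by
  rw [← productDegree_const (∞ : Compactified (m + k)), productDegree_congr
    (ContinuousMap.Homotopic.comp (.refl (blockSmash m k))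
      (.prodMk (.refl F) (const_homotopic_const_infty q)))]
  congr 1
  ext1 p
  exact blockSmash_infty_right _

theorem productDegree_blockSmash_comp_const_prodMk [NeZero m]
    (G : C(Compactified m × Compactified k, Compactified k)) (p : Compactified m) :
    productDegree ((blockSmash m k).comp (.prodMk (.const _ p) G)) = 0 := by
  rw [← productDegree_const (∞ : Compactified (m + k)), productDegree_congr
    (ContinuousMap.Homotopic.comp (.refl (blockSmash m k))
      (.prodMk (const_homotopic_const_infty p) (.refl G)))]
  congr 1
  ext1 q
  exact blockSmash_infty_left _

theorem natAdd_ne_castAdd (i : Fin m) (j : Fin k) : j.natAdd m ≠ i.castAdd k :=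
  Fin.ne_of_gt (i.2.trans_le (Nat.le_add_right m j))

theorem productDegree_comp_diag_left [NeZero m]
    (Φ : C((Compactified m × Compactified k) × Compactified m × Compactified k,
      Compactified (m + k))) :
    productDegree (Φ.comp (.prodMk (.id _) (.id _))) =
      productDegree (Φ.comp (.prodMk (.id _) (.prodMap (.const _ ∞) (.id _)))) +
        productDegree (Φ.comp (.prodMk (.prodMap (.const _ ∞) (.id _)) (.id _))) := by
  refine torusDegree_comp_diag_comp (i := (0 : Fin m).castAdd k) (fun z => ?_) Φ
  have hblock : (fun j => pinCoord ((0 : Fin m).castAdd k) z (j.natAdd m)) =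
      fun j : Fin k => z (j.natAdd m) :=
    funext fun j => Function.update_of_ne (natAdd_ne_castAdd 0 j) ..
  exact Prod.ext (torusCollapse_eq_infty (i := 0) (by simp [pinCoord]))
    (congrArg (torusCollapse k) hblock)

theorem productDegree_comp_diag_right [NeZero k]
    (Φ : C((Compactified m × Compactified k) × Compactified m × Compactified k,
      Compactified (m + k))) :
    productDegree (Φ.comp (.prodMk (.id _) (.id _))) =
      productDegree (Φ.comp (.prodMk (.id _) (.prodMap (.id _) (.const _ ∞)))) +
        productDegree (Φ.comp (.prodMk (.prodMap (.id _) (.const _ ∞)) (.id _))) := by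
  refine torusDegree_comp_diag_comp (i := (0 : Fin k).natAdd m) (fun z => ?_) Φ
  have hblock : (fun j => pinCoord ((0 : Fin k).natAdd m) z (j.castAdd k)) =
      fun j : Fin m => z (j.castAdd k) :=
    funext fun j => Function.update_of_ne (natAdd_ne_castAdd j 0).symm ..
  exact Prod.ext (congrArg (torusCollapse m) hblock)
    (torusCollapse_eq_infty (i := 0) (by simp [pinCoord]))

variable [NeZero n]

theorem productDegree_blockSmash_comp_prodMk_snd
    (F : C(Compactified n × Compactified n, Compactified n))
    (g : C(Compactified n, Compactified n)) :
    productDegree ((blockSmash n n).comp (F.prodMk (g.comp .snd))) =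
      bidegree F 0 * sphereDegree g := by
  have h := productDegree_comp_diag_right ((blockSmash n n).comp (F.prodMap (g.comp .snd)))
  have hconst := productDegree_blockSmash_comp_prodMk_const F (g ∞)
  have hmain := productDegree_blockSmash_comp_prodMap (F.comp (axis 0)) g
  exact h.trans ((congrArg₂ (· + ·) hconst hmain).trans (zero_add _))

theorem productDegree_blockSmash_comp_snd_prodMk
    (g : C(Compactified n, Compactified n))
    (F : C(Compactified n × Compactified n, Compactified n)) :
    productDegree ((blockSmash n n).comp (.prodMk (g.comp .snd) F)) =
      sphereDegree g * bidegree F 0 := by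
  have h := productDegree_comp_diag_right ((blockSmash n n).comp (.prodMap (g.comp .snd) F))
  have hconst := productDegree_blockSmash_comp_const_prodMk F (g ∞)
  have hmain := productDegree_blockSmash_comp_prodMap_swap g (F.comp (axis 0))
  exact h.trans ((congrArg₂ (· + ·) hmain hconst).trans (add_zero _))

theorem productDegree_blockSmash_comp_prodMk
    (F G : C(Compactified n × Compactified n, Compactified n)) :
    productDegree ((blockSmash n n).comp (F.prodMk G)) =
      bidegree F 0 * bidegree G 1 + bidegree F 1 * bidegree G 0 := by
  have h := productDegree_comp_diag_left ((blockSmash n n).comp (F.prodMap G))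
  exact h.trans (congrArg₂ _ (productDegree_blockSmash_comp_prodMk_snd F (G.comp (axis 1)))
    (productDegree_blockSmash_comp_snd_prodMk (F.comp (axis 1)) G))

theorem bidegree_mul_add_mul_eq_zero {F G : C(Compactified n × Compactified n, Compactified n)}
    (h : ∀ p, F p = ∞ ∨ G p = ∞) :
    bidegree F 0 * bidegree G 1 + bidegree F 1 * bidegree G 0 = 0 := by
  have hconst : (blockSmash n n).comp (F.prodMk G) = .const _ ∞ := by
    ext1 p
    obtain hp | hp := h p <;> simp [hp]
  rw [← productDegree_blockSmash_comp_prodMk, hconst, productDegree_const]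

theorem mul_add_mul_ne_zero_of_charTwo {R : Type*} [CommRing R] [Nontrivial R] [CharP R 2]
    {a b c d p q r s : R} (h₁₁ : a * p + b * q = 1) (h₁₂ : a * r + b * s = 0)
    (h₂₂ : c * r + d * s = 1) : a * d + b * c ≠ 0 := by
  rw [← CharTwo.sub_eq_add]
  intro hdet
  refine one_ne_zero (α := R) ?_
  linear_combination (p * s - q * r) * hdet + (c * p + d * q) * h₁₂ - (c * r + d * s) * h₁₁ - h₂₂

instance charP_germ_zmod_two : CharP (Germ (atTop : Filter ℕ) (ZMod 2)) 2 :=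
  CharTwo.of_one_ne_zero_of_two_eq_zero one_ne_zero
    (congrArg (Germ.const (l := (atTop : Filter ℕ))) (CharTwo.two_eq_zero (R := ZMod 2)))

theorem exists_ne_infty_and_ne_infty {F G : C(Compactified n × Compactified n, Compactified n)}
    {f g : C(Compactified n, Compactified n × Compactified n)} {q : Compactified n}
    (hFf : (F.comp f).Homotopic (.id _)) (hFg : (F.comp g).Homotopic (.const _ q))
    (hGg : (G.comp g).Homotopic (.id _)) : ∃ p, F p ≠ ∞ ∧ G p ≠ ∞ := by
  by_contra! h
  have hcomp (K : C(Compactified n × Compactified n, Compactified n))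
      (k : C(Compactified n, Compactified n × Compactified n)) :
      bidegree K 0 * sphereDegree (.comp .fst k) + bidegree K 1 * sphereDegree (.comp .snd k) =
        sphereDegree (K.comp k) :=
    (sphereDegree_comp_prodMk K (.comp .fst k) (.comp .snd k)).symm
  have h₁₁ := (hcomp F f).trans ((sphereDegree_congr hFf).trans sphereDegree_id)
  have h₁₂ := (hcomp F g).trans ((sphereDegree_congr hFg).trans (sphereDegree_const q))
  have h₂₂ := (hcomp G g).trans ((sphereDegree_congr hGg).trans sphereDegree_id)
  exact mul_add_mul_ne_zero_of_charTwo h₁₁ h₁₂ h₂₂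
    (bidegree_mul_add_mul_eq_zero fun p => or_iff_not_imp_left.2 (h p))

end Bidegree

section Wedge

variable {X Y : Type} {Z : Type*} [TopologicalSpace X] [TopologicalSpace Y] [TopologicalSpace Z]
variable {x₀ : X} {y₀ : Y}

/-- The inclusion of the first summand of a wedge. -/
def wedgeInl : C(X, Wedge X Y x₀ y₀) :=
  ⟨fun x => Quot.mk _ (Sum.inl x), continuous_quot_mk.comp continuous_inl⟩

/-- The inclusion of the second summand of a wedge. -/
def wedgeInr : C(Y, Wedge X Y x₀ y₀) :=
  ⟨fun y => Quot.mk _ (Sum.inr y), continuous_quot_mk.comp continuous_inr⟩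

/-- The map out of a wedge induced by two maps that agree at the base points. -/
def wedgeDesc (f : C(X, Z)) (g : C(Y, Z)) (h : f x₀ = g y₀) : C(Wedge X Y x₀ y₀, Z) where
  toFun := Quot.lift (Sum.elim f g) (by rintro _ _ ⟨rfl, rfl⟩; exact h)
  continuous_toFun := continuous_quot_lift _ (f.continuous.sumElim g.continuous)

/-- The retraction of a wedge onto its first summand that collapses the second. -/
def wedgeFst : C(Wedge X Y x₀ y₀, X) :=
  wedgeDesc (.id X) (.const Y x₀) rfl

/-- The retraction of a wedge onto its second summand that collapses the first. -/
def wedgeSnd : C(Wedge X Y x₀ y₀, Y) :=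
  wedgeDesc (.const X y₀) (.id Y) rfl

theorem wedgeFst_eq_or_wedgeSnd_eq (w : Wedge X Y x₀ y₀) : wedgeFst w = x₀ ∨ wedgeSnd w = y₀ := by
  obtain ⟨x | y⟩ := w
  · exact .inr rfl
  · exact .inl rfl

theorem exists_maps_of_hDominates_wedge {P : Type} [TopologicalSpace P]
    (hP : HDominates P (Wedge X Y x₀ y₀)) :
    ∃ (F : C(P, X)) (G : C(P, Y)) (f : C(X, P)) (g : C(Y, P)),
      (F.comp f).Homotopic (.id X) ∧ (F.comp g).Homotopic (.const Y x₀) ∧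
        (G.comp g).Homotopic (.id Y) ∧ ∀ p, F p = x₀ ∨ G p = y₀ := by
  obtain ⟨d, u, hdu⟩ := hP
  exact ⟨wedgeFst.comp d, wedgeSnd.comp d, u.comp wedgeInl, u.comp wedgeInr,
    .comp (.refl wedgeFst) (.comp hdu (.refl wedgeInl)),
    .comp (.refl wedgeFst) (.comp hdu (.refl wedgeInr)),
    .comp (.refl wedgeSnd) (.comp hdu (.refl wedgeInr)),
    fun p => wedgeFst_eq_or_wedgeSnd_eq (d p)⟩

theorem exists_ne_and_ne_of_sphere {n : ℕ} [NeZero n]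
    {F G : C(USphere n × USphere n, USphere n)} {f g : C(USphere n, USphere n × USphere n)}
    {q : USphere n} (x₀ y₀ : USphere n) (hFf : (F.comp f).Homotopic (.id _))
    (hFg : (F.comp g).Homotopic (.const _ q)) (hGg : (G.comp g).Homotopic (.id _)) :
    ∃ p, F p ≠ x₀ ∧ G p ≠ y₀ := by
  obtain ⟨h₀, rfl⟩ := exists_homeomorph_sphere_apply_infty n x₀
  obtain ⟨h₁, rfl⟩ := exists_homeomorph_sphere_apply_infty n y₀
  let e : Compactified n × Compactified n ≃ₜ USphere n × USphere n := h₀.prodCongr h₀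
  let φ : C(Compactified n × Compactified n, USphere n × USphere n) := e
  let ψ : C(USphere n × USphere n, Compactified n × Compactified n) := e.symm
  let η₀ : C(Compactified n, USphere n) := h₀
  let η₁ : C(Compactified n, USphere n) := h₁
  let κ₀ : C(USphere n, Compactified n) := h₀.symm
  let κ₁ : C(USphere n, Compactified n) := h₁.symm
  have hκη₀ : κ₀.comp η₀ = .id _ := h₀.symm_comp_toContinuousMap
  have hκη₁ : κ₁.comp η₁ = .id _ := h₁.symm_comp_toContinuousMap
  have hcancel (K : C(USphere n × USphere n, USphere n))
      (k : C(USphere n, USphere n × USphere n)) (κ : C(USphere n, Compactified n))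
      (η : C(Compactified n, USphere n)) :
      (κ.comp (K.comp φ)).comp (ψ.comp (k.comp η)) = κ.comp ((K.comp k).comp η) := by
    ext1 x
    simp [φ, ψ]
  obtain ⟨p, hF, hG⟩ := exists_ne_infty_and_ne_infty (q := κ₀ q)
    (F := κ₀.comp (F.comp φ)) (G := κ₁.comp (G.comp φ))
    (f := ψ.comp (f.comp η₀)) (g := ψ.comp (g.comp η₁))
    (by rw [hcancel, ← hκη₀]; exact .comp (.refl κ₀) (.comp hFf (.refl η₀)))
    (by rw [hcancel]; exact .comp (.refl κ₀) (.comp hFg (.refl η₁)))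
    (by rw [hcancel, ← hκη₁]; exact .comp (.refl κ₁) (.comp hGg (.refl η₁)))
  exact ⟨e p, fun h => hF (h₀.symm_apply_eq.2 h), fun h => hG (h₁.symm_apply_eq.2 h)⟩

end Wedge

end WedgeDomination

open WedgeDomination in
theorem wedge_not_dominated_by_prod_self_general (n : ℕ) (hn : n ≠ 0) (x₀ y₀ : USphere n) :
    ¬ HDominates (USphere n × USphere n) (Wedge (USphere n) (USphere n) x₀ y₀) := by
  have : NeZero n := ⟨hn⟩
  intro h
  obtain ⟨F, G, f, g, hFf, hFg, hGg, hFG⟩ := exists_maps_of_hDominates_wedge h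
  obtain ⟨p, hF, hG⟩ := exists_ne_and_ne_of_sphere x₀ y₀ hFf hFg hGg
  exact (hFG p).elim hF hG

/-- For `n ≥ 2`, the wedge `Sⁿ ∨ Sⁿ` is not homotopy dominated by `Sⁿ × Sⁿ`. -/
theorem wedge_not_dominated_by_prod_self (n : ℕ) (hn : 2 ≤ n) :
    ¬ HDominates (USphere n × USphere n)
        (Wedge (USphere n) (USphere n) (spherePt n) (spherePt n)) :=
  wedge_not_dominated_by_prod_self_general n (by lia) _ _
end

section
/- For every n ≥ 2, the wedge sum S^n ∨ S^{n+1} is not homotopy dominated by the product S^n × S^{n+1}. -/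
/-!
Let `p < q` be the dimensions of the two spheres. A domination provides a self-map `Φ` of
`Sᵖ × S^q` with values in the wedge (seen inside the product) whose components restrict, up to
homotopy, to the identity along maps `i` and `j` from the factors.

Every map `Sᵖ → S^q` is null-homotopic, so `i` and `j` may be replaced by self-maps of the factors:
precomposed with their product, `Φ` becomes, up to homotopy, the identity on each factor. Such a map
has a right homotopy inverse, because a family of self-maps of a space, parametrised by a sphere
and homotopic to the identity at one point, is invertible up to homotopy. Hence the identity of
`Sᵖ × S^q` is homotopic to a map into the wedge.

Now embed `Sᵖ × S^q` in `ℝ^(p+q+1)` as the boundary of a tube around a `p`-sphere, and let `P` be a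
point of that core sphere opposite to the basepoint. The image of the wedge can be pushed away from
`P` along straight lines, so the embedding is null-homotopic in the complement of `P`. It then
extends from the boundary to the tube and, by the identity, to a self-map of `ℝ^(p+q+1)` which is
the identity near infinity and misses `P`. This contradicts Brouwer's theorem, obtained here by the
volume argument of Milnor and Rogers: if `φ` vanishes on the sphere, `x ↦ x + t φ(x)` permutes the
ball for small `t`, so the polynomial `t ↦ ∫ det (1 + t Dφ)` is constant, whereas for a retraction
onto the sphere it vanishes at `t = 1`.
-/

open CategoryTheory

/-! ### Continuous maps equal to the identity near infinity -/

section VolumePreservation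

open Polynomial MeasureTheory Metric Filter Topology Set Module
open scoped NNReal

theorem exists_polynomial_eval_eq_det {R M : Type*} [CommRing R] [Nontrivial R] [AddCommGroup M]
    [Module R M] [Module.Free R M] [Module.Finite R M] (f : Module.End R M) :
    ∃ P : R[X], P.natDegree ≤ finrank R M ∧ ∀ t, P.eval t = LinearMap.det (1 + t • f) := by
  let b := Module.finBasis R M
  refine ⟨((X : R[X]) • (LinearMap.toMatrix b b f).map C + (1 : Matrix _ _ R).map C).det, ?_, ?_⟩
  · simpa using natDegree_det_X_add_C_le (LinearMap.toMatrix b b f) 1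
  · intro t
    rw [← LinearMap.det_toMatrix b, ← coe_evalRingHom, RingHom.map_det]
    congr 1
    ext i j
    simp only [RingHom.mapMatrix_apply, Matrix.map_apply, Matrix.add_apply, Matrix.smul_apply,
      map_add, map_smul, LinearMap.toMatrix_one, Matrix.one_apply, smul_eq_mul, coe_evalRingHom,
      eval_mul, eval_X, eval_C, map_add]
    ring

theorem exists_polynomial_eval_eq_integral {α : Type*} [MeasurableSpace α] {μ : Measure α}
    {N : ℕ} {P : α → ℝ[X]} (hdeg : ∀ x, (P x).natDegree ≤ N)
    (hint : ∀ t, Integrable (fun x ↦ (P x).eval t) μ) :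
    ∃ Q : ℝ[X], ∀ t, Q.eval t = ∫ x, (P x).eval t ∂μ := by
  let nodes := Finset.range (N + 1)
  let node : ℕ → ℝ := (↑)
  have hP : ∀ x t, (P x).eval t =
      ∑ i ∈ nodes, (P x).eval (node i) * (Lagrange.basis nodes node i).eval t := by
    intro x t
    have hlt : (P x).degree < nodes.card := by
      rw [Finset.card_range]
      exact degree_le_natDegree.trans_lt (by exact_mod_cast Nat.lt_succ_of_le (hdeg x))
    conv_lhs => rw [Lagrange.eq_interpolate Nat.cast_injective.injOn hlt]
    simp [node, Lagrange.interpolate_apply, eval_finsetSum]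
  refine ⟨Lagrange.interpolate nodes node fun i ↦ ∫ x, (P x).eval (node i) ∂μ, fun t ↦ ?_⟩
  calc _ = ∑ i ∈ nodes, (∫ x, (P x).eval (node i) ∂μ) * (Lagrange.basis nodes node i).eval t := by
        simp [Lagrange.interpolate_apply, eval_finsetSum]
    _ = ∫ x, ∑ i ∈ nodes, (P x).eval (node i) * (Lagrange.basis nodes node i).eval t ∂μ := by
        rw [integral_finsetSum _ fun i _ ↦ (hint _).mul_const _]
        simp only [integral_mul_const]
    _ = ∫ x, (P x).eval t ∂μ := by simp only [← hP]

theorem exists_mem_segment_frontier {E : Type*} [AddCommGroup E] [Module ℝ E] [TopologicalSpace E]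
    [IsTopologicalAddGroup E] [ContinuousSMul ℝ E] {s : Set E} (hs : IsClosed s) {x y : E}
    (hx : x ∈ s) (hy : y ∉ s) : ∃ z ∈ segment ℝ x y, z ∈ frontier s := by
  by_contra! h
  have hx' : x ∈ interior s := by
    rw [← self_sdiff_frontier]
    exact ⟨hx, h x (left_mem_segment ℝ x y)⟩
  have hcover : segment ℝ x y ⊆ interior s ∪ sᶜ := fun z hz ↦ by
    by_cases hzs : z ∈ s
    · exact Or.inl (self_sdiff_frontier s ▸ ⟨hzs, h z hz⟩)
    · exact Or.inr hzs
  obtain ⟨z, -, hz, hz'⟩ := (convex_segment x y).isPreconnected _ _ isOpen_interior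
    hs.isOpen_compl hcover ⟨x, left_mem_segment ℝ x y, hx'⟩ ⟨y, right_mem_segment ℝ x y, hy⟩
  exact hz' (interior_subset hz)

theorem lipschitzWith_indicator_of_eqOn_frontier {E F : Type*} [SeminormedAddCommGroup E]
    [NormedSpace ℝ E] [SeminormedAddCommGroup F] {s : Set E} (hs : IsClosed s) {φ : E → F}
    {K : ℝ≥0} (hφ : LipschitzOnWith K φ s) (h0 : ∀ x ∈ frontier s, φ x = 0) :
    LipschitzWith K (s.indicator φ) := by
  have hcross : ∀ x ∈ s, ∀ y ∉ s, dist (φ x) 0 ≤ K * dist x y := by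
    intro x hx y hy
    obtain ⟨z, hz, hzs⟩ := exists_mem_segment_frontier hs hx hy
    calc dist (φ x) 0 = dist (φ x) (φ z) := by rw [h0 z hzs]
      _ ≤ K * dist x z := hφ.dist_le_mul x hx z (hs.frontier_subset hzs)
      _ ≤ K * dist x y := by
        gcongr
        linarith [dist_add_dist_of_mem_segment hz, dist_nonneg (x := z) (y := y)]
  refine LipschitzWith.of_dist_le_mul fun x y ↦ ?_
  by_cases hx : x ∈ s <;> by_cases hy : y ∈ s <;> simp only [hx, hy, indicator_of_mem,
    indicator_of_notMem, not_false_eq_true]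
  · exact hφ.dist_le_mul x hx y hy
  · exact hcross x hx y hy
  · rw [dist_comm, dist_comm x]
    exact hcross y hy x hx
  · rw [dist_self]
    positivity

theorem bijective_id_add_of_lipschitzWith {E : Type*} [NormedAddCommGroup E] [NormedSpace ℝ E]
    [CompleteSpace E] {φ : E → E} {K : ℝ≥0} (hφ : LipschitzWith K φ) (hK : K < 1) :
    Function.Bijective fun x ↦ x + φ x := by
  have happrox : ApproximatesLinearOn (fun x ↦ x + φ x)
      (ContinuousLinearEquiv.refl ℝ E : E →L[ℝ] E) univ K := by
    intro x _ y _
    simpa [add_sub_add_comm] using hφ.norm_sub_le x y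
  rcases subsingleton_or_nontrivial E with hE | hE
  · exact ⟨Function.injective_of_subsingleton _, fun y ↦ ⟨y, Subsingleton.elim _ _⟩⟩
  · have hlt : K < ‖((ContinuousLinearEquiv.refl ℝ E).symm : E →L[ℝ] E)‖₊⁻¹ := by simpa using hK
    exact ⟨injOn_univ.1 (happrox.injOn (.inr hlt)), happrox.surjective (.inr hlt)⟩

section

variable {E : Type*} [NormedAddCommGroup E] [NormedSpace ℝ E]
  {s : Set E} {φ : E → E}

theorem eventually_bijOn_id_add_smul [CompleteSpace E] (hs : IsClosed s) {K : ℝ≥0}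
    (hφ : LipschitzOnWith K φ s) (h0 : ∀ x ∈ frontier s, φ x = 0) :
    ∀ᶠ t : ℝ in 𝓝 0, BijOn (fun x ↦ x + t • φ x) s s := by
  have hsmall : ∀ᶠ t : ℝ in 𝓝 0, ‖t‖₊ * K < 1 :=
    (show Continuous fun t : ℝ ↦ ‖t‖₊ * K by fun_prop).continuousAt.eventually_lt_const (by simp)
  filter_upwards [hsmall] with t ht
  let f : E → E := fun x ↦ x + t • s.indicator φ x
  have hf : Function.Bijective f := bijective_id_add_of_lipschitzWith
    ((lipschitzWith_smul t).comp (lipschitzWith_indicator_of_eqOn_frontier hs hφ h0)) ht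
  have hid : EqOn f id sᶜ := fun x hx ↦ by simp [f, indicator_of_notMem hx]
  have himage : f '' s = s := by
    rw [← compl_inj_iff, ← image_compl_eq hf, hid.image_eq_self]
  have hfs : BijOn f s s := by
    simpa only [himage] using hf.injective.injOn.bijOn_image (s := s)
  exact hfs.congr fun x hx ↦ by simp [f, indicator_of_mem hx]

theorem continuous_det_id_add_smul_fderiv (hφ : ContDiff ℝ 1 φ) :
    Continuous fun p : ℝ × E ↦ (ContinuousLinearMap.id ℝ E + p.1 • fderiv ℝ φ p.2).det := by
  have := hφ.continuous_fderiv one_ne_zero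
  exact ContinuousLinearMap.continuous_det.comp (by fun_prop)

variable [FiniteDimensional ℝ E] [MeasurableSpace E] [BorelSpace E] (μ : Measure E)
  [μ.IsAddHaarMeasure]

theorem eventually_setIntegral_det_id_add_smul_fderiv (hs : IsCompact s) (hsc : Convex ℝ s)
    (hφ : ContDiff ℝ 1 φ) (h0 : ∀ x ∈ frontier s, φ x = 0) : ∀ᶠ t : ℝ in 𝓝 0,
      ∫ x in s, (ContinuousLinearMap.id ℝ E + t • fderiv ℝ φ x).det ∂μ = μ.real s := by
  have hcont := continuous_det_id_add_smul_fderiv hφ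
  have hpos : ∀ᶠ t in 𝓝 (0 : ℝ), ∀ x ∈ s,
      0 < (ContinuousLinearMap.id ℝ E + t • fderiv ℝ φ x).det :=
    hs.eventually_forall_of_forall_eventually fun x _ ↦
      hcont.continuousAt.eventually_const_lt (by simp [ContinuousLinearMap.det])
  obtain ⟨K, hK⟩ := hφ.contDiffOn.exists_lipschitzOnWith one_ne_zero hsc hs
  filter_upwards [hpos, eventually_bijOn_id_add_smul hs.isClosed hK h0] with t ht hbij
  have hderiv : ∀ x ∈ s, HasFDerivWithinAt (fun x ↦ x + t • φ x)
      (ContinuousLinearMap.id ℝ E + t • fderiv ℝ φ x) s x := fun x _ ↦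
    ((hasFDerivAt_id x).add
      ((hφ.differentiable one_ne_zero x).hasFDerivAt.const_smul t)).hasFDerivWithinAt
  have hchange := integral_image_eq_integral_abs_det_fderiv_smul μ hs.measurableSet hderiv
    hbij.injOn (fun _ ↦ (1 : ℝ))
  rw [hbij.image_eq] at hchange
  calc _ = ∫ x in s, |(ContinuousLinearMap.id ℝ E + t • fderiv ℝ φ x).det| • (1 : ℝ) ∂μ :=
        setIntegral_congr_fun hs.measurableSet fun x hx ↦ by simp [abs_of_pos (ht x hx)]
    _ = μ.real s := by rw [← hchange, setIntegral_const, smul_eq_mul, mul_one]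

theorem setIntegral_det_fderiv_of_eqOn_frontier (hs : IsCompact s) (hsc : Convex ℝ s) {f : E → E}
    (hf : ContDiff ℝ 1 f) (hid : EqOn f id (frontier s)) :
    ∫ x in s, (fderiv ℝ f x).det ∂μ = μ.real s := by
  have hφ : ContDiff ℝ 1 (f - id) := hf.sub contDiff_id
  choose P hdeg hP using fun x ↦ exists_polynomial_eval_eq_det (fderiv ℝ (f - id) x : E →ₗ[ℝ] E)
  have hP' : ∀ x t, (P x).eval t = (ContinuousLinearMap.id ℝ E + t • fderiv ℝ (f - id) x).det :=
    fun x t ↦ hP x t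
  obtain ⟨Q, hQ⟩ := exists_polynomial_eval_eq_integral (μ := μ.restrict s) hdeg fun t ↦ by
    simp only [hP']
    exact ((continuous_det_id_add_smul_fderiv hφ).comp
      (Continuous.prodMk_right t)).continuousOn.integrableOn_compact hs
  have hnear : ∀ᶠ t in 𝓝 (0 : ℝ), Q.eval t = (C (μ.real s)).eval t := by
    filter_upwards [eventually_setIntegral_det_id_add_smul_fderiv μ hs hsc hφ
      fun x hx ↦ by simp [hid hx]] with t ht
    simpa [hQ, hP'] using ht
  have hconst : Q = C (μ.real s) := eq_of_infinite_eval_eq _ _ (infinite_of_mem_nhds (0 : ℝ) hnear)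
  have hone : ∀ x, (P x).eval 1 = (fderiv ℝ f x).det := fun x ↦ by
    rw [hP', fderiv_sub (hf.differentiable one_ne_zero x) differentiableAt_id, fderiv_id, one_smul,
      add_sub_cancel]
  simpa [hone, hconst] using (hQ 1).symm

end

section

variable {E : Type*} [NormedAddCommGroup E] [InnerProductSpace ℝ E]

theorem inner_fderiv_eq_zero_of_norm_eq {f : E → E} {x : E} (hf : DifferentiableAt ℝ f x) {r : ℝ}
    (hr : ∀ y, ‖f y‖ = r) (v : E) : inner ℝ (f x) (fderiv ℝ f x v) = 0 := by
  have hconst : (fun y ↦ inner ℝ (f y) (f y)) = fun _ ↦ r ^ 2 := by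
    simp only [real_inner_self_eq_norm_sq, hr]
  have hderiv := fderiv_inner_apply ℝ hf hf v
  rw [hconst, fderiv_fun_const] at hderiv
  simp only [Pi.zero_apply, zero_apply, real_inner_comm (f x)] at hderiv
  linarith

variable [FiniteDimensional ℝ E]

theorem det_fderiv_eq_zero_of_norm_eq {f : E → E} {x : E} (hf : DifferentiableAt ℝ f x) {r : ℝ}
    (hr0 : r ≠ 0) (hr : ∀ y, ‖f y‖ = r) : (fderiv ℝ f x).det = 0 := by
  by_contra hdet
  obtain ⟨v, hv⟩ := (LinearMap.equivOfDetNeZero _ hdet).surjective (f x)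
  have hinner := inner_fderiv_eq_zero_of_norm_eq hf hr v
  rw [show fderiv ℝ f x v = f x from hv, real_inner_self_eq_norm_sq, hr] at hinner
  exact hr0 (by simpa using hinner)

theorem not_contDiff_retraction_sphere {r : ℝ} (hr : 0 < r) {f : E → E} (hf : ContDiff ℝ 1 f)
    (hid : EqOn f id (sphere 0 r)) : ¬ ∀ x, ‖f x‖ = r := by
  intro hnorm
  borelize E
  let μ : Measure E := Measure.addHaar
  have hvol : ∫ x in closedBall (0 : E) r, (fderiv ℝ f x).det ∂μ = μ.real (closedBall 0 r) :=
    setIntegral_det_fderiv_of_eqOn_frontier μ (isCompact_closedBall 0 r)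
      (convex_closedBall 0 r) hf (by rwa [frontier_closedBall _ hr.ne'])
  have hdet : ∀ x, (fderiv ℝ f x).det = 0 := fun x ↦
    det_fderiv_eq_zero_of_norm_eq (hf.differentiable one_ne_zero x) hr.ne' hnorm
  simp only [hdet, integral_zero] at hvol
  refine (ENNReal.toReal_pos ?_ measure_closedBall_lt_top.ne).ne hvol
  exact (measure_closedBall_pos μ 0 hr).ne'

theorem exists_contDiff_ne_zero_of_continuous {f : E → E} (hf : Continuous f)
    (h0 : ∀ x, f x ≠ 0) :
    ∃ g : E → E, ContDiff ℝ 1 g ∧ (∀ x, g x ≠ 0) ∧ ∀ x, f x = x → g x = x := by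
  obtain ⟨φ, hφ, hφf, hsupp⟩ := (hf.sub continuous_id).exists_contDiff_approx 1 hf.norm
    fun x ↦ norm_pos_iff.2 (h0 x)
  refine ⟨fun x ↦ x + φ x, contDiff_id.add hφ, fun x hx ↦ ?_, fun x hx ↦ ?_⟩
  · have hlt := hφf x
    rw [eq_neg_of_add_eq_zero_right hx, dist_eq_norm, Pi.sub_apply, id, neg_sub_left,
      sub_add_cancel, norm_neg] at hlt
    exact hlt.false
  · have hφx : φ x = 0 := by
      by_contra hne
      exact hsupp hne (by simp [hx])
    simp [hφx]

theorem zero_mem_range_of_eventuallyEq_id_cocompact {f : E → E} (hf : Continuous f)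
    (hid : f =ᶠ[cocompact E] id) : 0 ∈ range f := by
  by_contra h0
  obtain ⟨g, hg, hg0, hgid⟩ := exists_contDiff_ne_zero_of_continuous hf fun x hx ↦ h0 ⟨x, hx⟩
  obtain ⟨M, -, hM⟩ := hasBasis_cobounded_norm.eventually_iff.1
    (cobounded_eq_cocompact (α := E) ▸ hid)
  let r := max M 1
  have hr : 0 < r := by positivity
  have hcont : ContDiff ℝ 1 fun x ↦ (r * ‖g x‖⁻¹) • g x :=
    (contDiff_const.mul ((hg.norm ℝ hg0).inv fun x ↦ norm_ne_zero_iff.2 (hg0 x))).smul hg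
  refine not_contDiff_retraction_sphere hr hcont (fun x hx ↦ ?_) fun x ↦ ?_
  · rw [mem_sphere_zero_iff_norm] at hx
    have hgx : g x = x := hgid x (hM ((le_max_left M 1).trans hx.ge))
    simp [hgx, hx, hr.ne']
  · rw [norm_smul, norm_mul, norm_inv, norm_norm, Real.norm_of_nonneg hr.le,
      inv_mul_cancel_right₀ (norm_ne_zero_iff.2 (hg0 x))]

end

theorem surjective_of_eventuallyEq_id_cocompact {V : Type*} [NormedAddCommGroup V]
    [NormedSpace ℝ V] [FiniteDimensional ℝ V] {f : V → V} (hf : Continuous f)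
    (hid : f =ᶠ[cocompact V] id) : Function.Surjective f := by
  intro y
  let φ : V ≃ₜ EuclideanSpace ℝ (Fin (finrank ℝ V)) :=
    (Homeomorph.addRight (-y)).trans toEuclidean.toHomeomorph
  have hφid : φ ∘ f ∘ φ.symm =ᶠ[cocompact _] id := by
    have := φ.symm.isClosedEmbedding.tendsto_cocompact.eventually hid
    filter_upwards [this] with x hx
    simp [hx]
  obtain ⟨x, hx⟩ := zero_mem_range_of_eventuallyEq_id_cocompact (by fun_prop) hφid
  refine ⟨φ.symm x, φ.injective (hx.trans ?_)⟩
  simp [φ]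

end VolumePreservation

/-! ### Maps into spheres -/

section SphereMaps

open Metric Filter Topology Module unitInterval
open NormedSpace (normalize)

section RadialProjection

variable {E : Type*} [NormedAddCommGroup E] [NormedSpace ℝ E]

open Classical in
/-- The radial projection of `E` onto its unit sphere, taking the junk value `e` at the origin. -/
noncomputable def radialProj (e : sphere (0 : E) 1) (v : E) : sphere (0 : E) 1 :=
  if h : v = 0 then e else
    ⟨normalize v, mem_sphere_zero_iff_norm.2 (NormedSpace.norm_normalize_eq_one_iff.2 h)⟩

variable (e : sphere (0 : E) 1)

theorem coe_radialProj {v : E} (hv : v ≠ 0) : (radialProj e v : E) = normalize v := by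
  simp [radialProj, hv]

theorem norm_smul_radialProj (v : E) : ‖v‖ • (radialProj e v : E) = v := by
  by_cases hv : v = 0
  · simp [hv]
  · rw [coe_radialProj e hv, NormedSpace.norm_smul_normalize]

theorem radialProj_smul_coe {c : ℝ} (hc : 0 < c) (x : sphere (0 : E) 1) :
    radialProj e (c • (x : E)) = x := by
  have hx : (x : E) ≠ 0 := ne_zero_of_mem_unit_sphere x
  apply Subtype.ext
  rw [coe_radialProj e (smul_ne_zero hc.ne' hx), NormedSpace.normalize_smul_of_pos hc,
    NormedSpace.normalize_eq_self_of_norm_eq_one (norm_eq_of_mem_sphere x)]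

theorem radialProj_coe (x : sphere (0 : E) 1) : radialProj e (x : E) = x := by
  simpa using radialProj_smul_coe e one_pos x

theorem continuousAt_radialProj {v : E} (hv : v ≠ 0) : ContinuousAt (radialProj e) v := by
  have hnormalize : ContinuousAt (fun v : E ↦ ‖v‖⁻¹ • v) v :=
    (continuous_norm.continuousAt.inv₀ (norm_ne_zero_iff.2 hv)).smul continuousAt_id
  rw [IsInducing.subtypeVal.continuousAt_iff]
  refine hnormalize.congr ?_
  filter_upwards [isOpen_ne.mem_nhds hv] with u hu
  exact (coe_radialProj e hu).symm

theorem continuous_radialProj_comp {Z : Type*} [TopologicalSpace Z] {w : Z → E}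
    (hw : Continuous w) (h0 : ∀ z, w z ≠ 0) : Continuous fun z ↦ radialProj e (w z) :=
  continuous_iff_continuousAt.2 fun z ↦
    (continuousAt_radialProj e (h0 z)).comp hw.continuousAt

end RadialProjection

section Homotopy

variable {E : Type*} [NormedAddCommGroup E] [NormedSpace ℝ E] {Z : Type*} [TopologicalSpace Z]

theorem homotopic_of_ne_neg {f g : C(Z, sphere (0 : E) 1)} (h : ∀ z, f z ≠ -g z) :
    f.Homotopic g := by
  rcases isEmpty_or_nonempty Z with hZ | ⟨⟨z₀⟩⟩
  · rw [show f = g from ContinuousMap.ext fun z ↦ hZ.elim z]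
  let w : I × Z → E := fun p ↦ (1 - (p.1 : ℝ)) • (f p.2 : E) + (p.1 : ℝ) • (g p.2 : E)
  have hw0 : ∀ p, w p ≠ 0 := by
    rintro ⟨s, z⟩ hsz
    have hfg : (1 - (s : ℝ)) • (f z : E) = (s : ℝ) • (-g z : E) := by
      rw [smul_neg]
      exact eq_neg_of_add_eq_zero_left hsz
    have hs : 1 - (s : ℝ) = s := by
      simpa [norm_smul, abs_of_nonneg s.2.1, abs_of_nonneg (sub_nonneg.2 s.2.2)] using
        congrArg norm hfg
    rw [hs] at hfg
    exact h z (Subtype.ext (smul_right_injective E (by linarith : (s : ℝ) ≠ 0) hfg))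
  exact ⟨{
    toFun := fun p ↦ radialProj (f z₀) (w p)
    continuous_toFun := continuous_radialProj_comp _ (by fun_prop) hw0
    map_zero_left := fun z ↦ by simp [w, radialProj_coe]
    map_one_left := fun z ↦ by simp [w, radialProj_coe] }⟩

theorem homotopic_radialProj_of_norm_sub_lt_one {f g : C(Z, sphere (0 : E) 1)} {w : Z → E}
    (e : sphere (0 : E) 1) (hg : ∀ z, g z = radialProj e (w z))
    (hw : ∀ z, ‖(f z : E) - w z‖ < 1) : f.Homotopic g := by
  refine homotopic_of_ne_neg fun z hz ↦ (hw z).not_ge ?_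
  have hdiff : (f z : E) - w z = -((1 + ‖w z‖) • (g z : E)) := by
    rw [add_smul, one_smul, hg, norm_smul_radialProj, ← hg, hz]
    simp [sub_eq_add_neg, add_comm]
  rw [hdiff, norm_neg, norm_smul, norm_eq_of_mem_sphere, mul_one,
    Real.norm_of_nonneg (by positivity)]
  linarith [norm_nonneg (w z)]

theorem nullhomotopic_of_finrank_lt_finrank {F : Type*} [FiniteDimensional ℝ E]
    [NormedAddCommGroup F] [NormedSpace ℝ F] [FiniteDimensional ℝ F] {s : Set E} (hs : IsClosed s)
    (hEF : finrank ℝ E < finrank ℝ F) (b : C(s, sphere (0 : F) 1)) : b.Nullhomotopic := by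
  have : Nontrivial F := nontrivial_of_finrank_pos (Nat.zero_lt_of_lt hEF)
  obtain ⟨e⟩ := (NormedSpace.sphere_nonempty (x := (0 : F)) (r := 1)).2 zero_le_one |>.coe_sort
  obtain ⟨b', hb'⟩ := ContinuousMap.exists_restrict_eq hs
    ((⟨Subtype.val, continuous_subtype_val⟩ : C(sphere (0 : F) 1, F)).comp b)
  obtain ⟨B, hB, hBb, -⟩ := b'.continuous.exists_contDiff_approx 1 (ε := fun _ ↦ 1 / 2)
    continuous_const fun _ ↦ by norm_num
  obtain ⟨v, hv, hvlt⟩ :=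
    (hB.dense_compl_range_of_finrank_lt_finrank hEF).exists_dist_lt 0 (ε := 1 / 2) (by norm_num)
  let G : C(E, sphere (0 : F) 1) := ⟨fun x ↦ radialProj e (B x - v),
    continuous_radialProj_comp e (by fun_prop) fun x hx ↦ hv ⟨x, sub_eq_zero.1 hx⟩⟩
  let incl : C(s, E) := ⟨Subtype.val, continuous_subtype_val⟩
  have hbG : b.Homotopic (G.comp incl) := by
    refine homotopic_radialProj_of_norm_sub_lt_one e (fun _ ↦ rfl) fun x ↦ ?_
    have hbx : (b x : F) = b' x := (DFunLike.congr_fun hb' x).symm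
    calc ‖(b x : F) - (B x - v)‖ = ‖(b' x - B x) + v‖ := by rw [hbx]; congr 1; abel
      _ ≤ ‖b' x - B x‖ + ‖v‖ := norm_add_le _ _
      _ < 1 := by
        have := hBb x
        rw [dist_comm, dist_eq_norm] at this
        rw [dist_zero_left] at hvlt
        linarith
  obtain ⟨y, hy⟩ : (G.comp incl).Nullhomotopic := by
    have := ((id_nullhomotopic E).comp_left incl).comp_right G
    simpa using this
  exact ⟨y, hbG.trans hy⟩

variable {Y : Type*} [TopologicalSpace Y] [PathConnectedSpace Y]

theorem homotopic_const_const (y y' : Y) :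
    (ContinuousMap.const Z y).Homotopic (ContinuousMap.const Z y') := by
  obtain ⟨γ⟩ := PathConnectedSpace.joined y y'
  exact ⟨{ toFun := fun p ↦ γ p.1, map_zero_left := by simp, map_one_left := by simp }⟩

theorem homotopic_const_of_nullhomotopic {f : C(Z, Y)} (hf : f.Nullhomotopic) (y : Y) :
    f.Homotopic (ContinuousMap.const Z y) :=
  hf.elim fun y' hy' ↦ hy'.trans (homotopic_const_const y' y)

theorem homotopic_of_nullhomotopic {f g : C(Z, Y)} (hf : f.Nullhomotopic) (hg : g.Nullhomotopic) :
    f.Homotopic g :=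
  hg.elim fun y hy ↦ (homotopic_const_of_nullhomotopic hf y).trans hy.symm

end Homotopy

theorem exists_extend_of_nullhomotopic {F X Z : Type*} [NormedAddCommGroup F] [NormedSpace ℝ F]
    [TopologicalSpace X] [TopologicalSpace Z] (e : sphere (0 : F) 1)
    {f : C(X × sphere (0 : F) 1, Z)} (hf : f.Nullhomotopic) :
    ∃ g : C(X × F, Z), ∀ x (y : sphere (0 : F) 1), g (x, y) = f (x, y) := by
  obtain ⟨z₀, ⟨H⟩⟩ := hf
  let g : X × F → Z := fun p ↦
    H (Set.projIcc 0 1 zero_le_one (2 - 2 * ‖p.2‖), p.1, radialProj e p.2)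
  have hsmall : ∀ p : X × F, ‖p.2‖ ≤ 1 / 2 → g p = z₀ := by
    intro p hp
    simp only [g]
    rw [Set.projIcc_of_right_le _ (by linarith)]
    exact H.apply_one _
  have hcont : ∀ p, ContinuousAt g p := by
    rintro ⟨x, v⟩
    by_cases hv : v = 0
    · have hnear : ∀ᶠ p : X × F in 𝓝 (x, v), ‖p.2‖ ≤ 1 / 2 :=
        (by fun_prop : Continuous fun p : X × F ↦ ‖p.2‖).continuousAt.eventually_le_const
          (by simp [hv])
      exact continuousAt_const.congr (hnear.mono fun p hp ↦ (hsmall p hp).symm)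
    · have hproj : ContinuousAt (fun p : X × F ↦ radialProj e p.2) (x, v) :=
        ContinuousAt.comp (f := Prod.snd) (continuousAt_radialProj e hv) continuousAt_snd
      have hproj' : Continuous fun p : X × F ↦ Set.projIcc (0 : ℝ) 1 zero_le_one (2 - 2 * ‖p.2‖) :=
        continuous_projIcc.comp (by fun_prop)
      exact H.continuous.continuousAt.comp
        (hproj'.continuousAt.prodMk (continuousAt_fst.prodMk hproj))
  refine ⟨⟨g, continuous_iff_continuousAt.2 hcont⟩, fun x y ↦ ?_⟩
  simp only [g, ContinuousMap.coe_mk, radialProj_coe, norm_eq_of_mem_sphere]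
  rw [Set.projIcc_of_le_left _ (by norm_num)]
  exact H.apply_zero _

end SphereMaps

/-! ### The torus of revolution -/

section Torus

open Metric Filter Topology Module unitInterval

variable {E F : Type*} [NormedAddCommGroup E] [NormedAddCommGroup F]
  [InnerProductSpace ℝ F] (e' : sphere (0 : F) 1)

theorem neg_one_le_inner_sphere (y : sphere (0 : F) 1) : -1 ≤ inner ℝ (e' : F) y := by
  have h := abs_real_inner_le_norm (e' : F) y
  rw [norm_eq_of_mem_sphere, norm_eq_of_mem_sphere, mul_one] at h
  exact neg_le_of_abs_le h

/-- The coordinate across the torus of revolution `tubeEmb` around the unit sphere of radius `2`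
in `E`: it takes values in `F = ℝ e' ⊕ e'ᗮ` and vanishes on the core sphere. -/
noncomputable def tubeCoord (ξ : E × (ℝ ∙ (e' : F))ᗮ) : F := (‖ξ.1‖ - 2) • (e' : F) + ξ.2

theorem continuous_tubeCoord : Continuous (tubeCoord e' : E × (ℝ ∙ (e' : F))ᗮ → F) := by
  unfold tubeCoord
  fun_prop

theorem norm_tubeCoord_sq (ξ : E × (ℝ ∙ (e' : F))ᗮ) :
    ‖tubeCoord e' ξ‖ ^ 2 = (‖ξ.1‖ - 2) ^ 2 + ‖ξ.2‖ ^ 2 := by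
  have horth : inner ℝ ((‖ξ.1‖ - 2) • (e' : F)) (ξ.2 : F) = 0 := by
    rw [inner_smul_left, Submodule.mem_orthogonal_singleton_iff_inner_right.1 ξ.2.2, mul_zero]
  have hpyth := norm_add_sq_eq_norm_sq_add_norm_sq_real horth
  simpa only [tubeCoord, ← sq, norm_smul, norm_eq_of_mem_sphere, mul_one, Real.norm_eq_abs, sq_abs,
    Submodule.coe_norm] using hpyth

theorem one_le_norm_fst_of_norm_tubeCoord_le_one {ξ : E × (ℝ ∙ (e' : F))ᗮ}
    (hξ : ‖tubeCoord e' ξ‖ ≤ 1) : 1 ≤ ‖ξ.1‖ := by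
  have h := norm_tubeCoord_sq e' ξ
  nlinarith [norm_nonneg (tubeCoord e' ξ), sq_nonneg ‖ξ.2‖, norm_nonneg ξ.1]

theorem one_le_norm_tubeCoord_of_four_le_norm {ξ : E × (ℝ ∙ (e' : F))ᗮ} (hξ : 4 ≤ ‖ξ‖) :
    1 ≤ ‖tubeCoord e' ξ‖ := by
  have h := norm_tubeCoord_sq e' ξ
  rcases le_max_iff.1 hξ with h1 | h2 <;>
    nlinarith [norm_nonneg (tubeCoord e' ξ), sq_nonneg ‖ξ.2‖, sq_nonneg (‖ξ.1‖ - 2)]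

variable [NormedSpace ℝ E]

/-- The torus of revolution `S(E) × S(F) ⊆ E × e'ᗮ`: the boundary of the tube of radius `1` around
the sphere of radius `2` in `E`. -/
noncomputable def tubeEmb (z : sphere (0 : E) 1 × sphere (0 : F) 1) : E × (ℝ ∙ (e' : F))ᗮ :=
  ((2 + inner ℝ (e' : F) z.2) • (z.1 : E), (ℝ ∙ (e' : F))ᗮ.orthogonalProjectionOnto (z.2 : F))

theorem continuous_tubeEmb :
    Continuous (tubeEmb e' : sphere (0 : E) 1 × sphere (0 : F) 1 → E × (ℝ ∙ (e' : F))ᗮ) := by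
  unfold tubeEmb
  fun_prop

theorem tubeCoord_tubeEmb (z : sphere (0 : E) 1 × sphere (0 : F) 1) :
    tubeCoord e' (tubeEmb e' z) = z.2 := by
  have hnonneg : 0 ≤ 2 + inner ℝ (e' : F) z.2 := by linarith [neg_one_le_inner_sphere e' z.2]
  have hnorm : ‖(tubeEmb e' z).1‖ = 2 + inner ℝ (e' : F) z.2 := by
    rw [tubeEmb, norm_smul, norm_eq_of_mem_sphere, mul_one, Real.norm_of_nonneg hnonneg]
  have hproj : ((tubeEmb e' z).2 : F) = z.2 - inner ℝ (e' : F) z.2 • (e' : F) := by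
    rw [← Submodule.starProjection_unit_singleton ℝ (norm_eq_of_mem_sphere e')]
    exact Submodule.starProjection_orthogonal_val _
  rw [tubeCoord, hnorm, hproj]
  module

theorem tubeEmb_radialProj_tubeCoord (e : sphere (0 : E) 1) {ξ : E × (ℝ ∙ (e' : F))ᗮ}
    {y : sphere (0 : F) 1} (hy : tubeCoord e' ξ = y) : tubeEmb e' (radialProj e ξ.1, y) = ξ := by
  have hinner : inner ℝ (e' : F) y = ‖ξ.1‖ - 2 := by
    rw [← hy, tubeCoord, inner_add_right, inner_smul_right,
      Submodule.mem_orthogonal_singleton_iff_inner_right.1 ξ.2.2,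
      inner_self_eq_one_of_norm_eq_one (norm_eq_of_mem_sphere e')]
    ring
  refine Prod.ext ?_ ?_
  · simp only [tubeEmb, hinner, add_sub_cancel, norm_smul_radialProj]
  · rw [tubeEmb, ← hy, tubeCoord, map_add, map_smul,
      Submodule.orthogonalProjectionOnto_orthogonalComplement_singleton_eq_zero, smul_zero,
      zero_add, Submodule.orthogonalProjectionOnto_mem_subspace_eq_self]

theorem tubeEmb_ne_core (z : sphere (0 : E) 1 × sphere (0 : F) 1) {v : E} (hv : ‖v‖ = 2) :
    tubeEmb e' z ≠ (v, 0) := by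
  intro hz
  have h := tubeCoord_tubeEmb e' z
  rw [hz, tubeCoord, hv, sub_self, zero_smul, Submodule.coe_zero, add_zero] at h
  exact ne_zero_of_mem_unit_sphere z.2 h.symm

theorem not_nullhomotopic_tubeEmb [FiniteDimensional ℝ E] [FiniteDimensional ℝ F]
    (e : sphere (0 : E) 1) {v : E} (hv : ‖v‖ = 2)
    (T : C(sphere (0 : E) 1 × sphere (0 : F) 1, {ξ : E × (ℝ ∙ (e' : F))ᗮ // ξ ≠ (v, 0)}))
    (hT : ∀ z, (T z : E × (ℝ ∙ (e' : F))ᗮ) = tubeEmb e' z) : ¬ T.Nullhomotopic := by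
  intro hnull
  obtain ⟨g, hg⟩ := exists_extend_of_nullhomotopic e' hnull
  let R : E × (ℝ ∙ (e' : F))ᗮ → E × (ℝ ∙ (e' : F))ᗮ := fun ξ ↦
    if 1 ≤ ‖tubeCoord e' ξ‖ then ξ else g (radialProj e ξ.1, tubeCoord e' ξ)
  have hcont : Continuous R := by
    have hcoord := continuous_tubeCoord (E := E) e'
    refine continuous_if_le continuous_const hcoord.norm continuousOn_id ?_ fun ξ hξ ↦ ?_
    · intro ξ hξ
      have hne : ξ.1 ≠ 0 :=
        norm_pos_iff.1 (one_pos.trans_le (one_le_norm_fst_of_norm_tubeCoord_le_one e' hξ))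
      have hproj : ContinuousAt (fun ξ : E × (ℝ ∙ (e' : F))ᗮ ↦ radialProj e ξ.1) ξ :=
        ContinuousAt.comp (f := Prod.fst) (continuousAt_radialProj e hne) continuousAt_fst
      exact (continuous_subtype_val.continuousAt.comp <|
        g.continuous.continuousAt.comp (hproj.prodMk hcoord.continuousAt)).continuousWithinAt
    · have h := hg (radialProj e ξ.1) ⟨tubeCoord e' ξ, mem_sphere_zero_iff_norm.2 hξ.symm⟩
      rw [h, hT]
      exact (tubeEmb_radialProj_tubeCoord e' e rfl).symm
  have hid : R =ᶠ[cocompact (E × (ℝ ∙ (e' : F))ᗮ)] id := by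
    filter_upwards [tendsto_norm_cocompact_atTop.eventually_ge_atTop 4] with ξ hξ
    exact if_pos (one_le_norm_tubeCoord_of_four_le_norm e' hξ)
  obtain ⟨ξ, hξ⟩ := surjective_of_eventuallyEq_id_cocompact hcont hid (v, 0)
  simp only [R] at hξ
  split_ifs at hξ with h
  · rw [hξ, tubeCoord, hv, sub_self, zero_smul, Submodule.coe_zero, add_zero, norm_zero] at h
    exact one_pos.not_ge h
  · exact (g _).2 hξ

theorem segment_tubeEmb_ne_core (e : sphere (0 : E) 1) {z : sphere (0 : E) 1 × sphere (0 : F) 1}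
    (hz : z.1 = e ∨ z.2 = e') {w : (ℝ ∙ (e' : F))ᗮ} (hw : w ≠ 0) (s : ℝ) :
    (1 - s) • tubeEmb e' z + s • ((-2 : ℝ) • (e : E), w) ≠ ((-2 : ℝ) • (e : E), 0) := by
  intro h
  rcases hz with he | he'
  · have hfst : ((1 - s) * (4 + inner ℝ (e' : F) z.2)) • (e : E) = 0 := by
      have := congrArg Prod.fst h
      simp only [tubeEmb, he, Prod.fst_add, Prod.smul_fst] at this
      refine Eq.trans ?_ (sub_eq_zero.2 this)
      module
    have hpos : 0 < 4 + inner ℝ (e' : F) z.2 := by linarith [neg_one_le_inner_sphere e' z.2]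
    have hs1 : 1 - s = 0 := by simpa [hpos.ne', ne_zero_of_mem_unit_sphere e] using hfst
    rw [hs1, show s = 1 by linarith] at h
    exact hw (by simpa using congrArg Prod.snd h)
  · have hsnd : s • w = 0 := by
      have hproj := Submodule.orthogonalProjectionOnto_orthogonalComplement_singleton_eq_zero
        (𝕜 := ℝ) (e' : F)
      simpa [tubeEmb, he', hproj] using congrArg Prod.snd h
    rw [(smul_eq_zero.1 hsnd).resolve_right hw] at h
    exact tubeEmb_ne_core e' z (v := (-2 : ℝ) • (e : E)) (by simp [norm_smul]) (by simpa using h)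

theorem not_homotopic_id_of_forall_fst_eq_or_snd_eq [FiniteDimensional ℝ E]
    [FiniteDimensional ℝ F] (hF : 1 < finrank ℝ F) (e : sphere (0 : E) 1)
    (Ψ : C(sphere (0 : E) 1 × sphere (0 : F) 1, sphere (0 : E) 1 × sphere (0 : F) 1))
    (hΨ : ∀ z, (Ψ z).1 = e ∨ (Ψ z).2 = e') : ¬ Ψ.Homotopic (ContinuousMap.id _) := by
  intro hhom
  let v : E := (-2 : ℝ) • (e : E)
  have hv : ‖v‖ = 2 := by simp [v, norm_smul]
  let T : C(sphere (0 : E) 1 × sphere (0 : F) 1, {ξ : E × (ℝ ∙ (e' : F))ᗮ // ξ ≠ (v, 0)}) :=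
    ⟨fun z ↦ ⟨tubeEmb e' z, tubeEmb_ne_core e' z hv⟩, (continuous_tubeEmb e').subtype_mk _⟩
  refine not_nullhomotopic_tubeEmb e' e hv T (fun _ ↦ rfl) ?_
  obtain ⟨w, hw⟩ : ∃ w : (ℝ ∙ (e' : F))ᗮ, w ≠ 0 := by
    have hdim := Submodule.finrank_add_finrank_orthogonal (ℝ ∙ (e' : F))
    rw [finrank_span_singleton (ne_zero_of_mem_unit_sphere e')] at hdim
    have : Nontrivial (ℝ ∙ (e' : F))ᗮ := nontrivial_of_finrank_pos (R := ℝ) (by omega)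
    exact exists_ne 0
  have hcont := continuous_tubeEmb (E := E) e'
  have hvw : (v, w) ≠ (v, 0) := fun h ↦ hw (Prod.ext_iff.1 h).2
  have hTΨ : (T.comp Ψ).Homotopic (ContinuousMap.const _ ⟨(v, w), hvw⟩) :=
    ⟨{toFun := fun p ↦ ⟨(1 - (p.1 : ℝ)) • tubeEmb e' (Ψ p.2) + (p.1 : ℝ) • (v, w),
        segment_tubeEmb_ne_core e' e (hΨ p.2) hw p.1⟩
      continuous_toFun := Continuous.subtype_mk (by fun_prop) _
      map_zero_left := fun z ↦ by simp [T]
      map_one_left := fun z ↦ by simp }⟩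
  exact ⟨_, ((ContinuousMap.Homotopic.refl T).comp hhom.symm).trans hTΨ⟩

end Torus

/-! ### Homotopies over hemispheres -/

section Hemispheres

open Metric Module unitInterval ContinuousMap

section InnerProduct

variable {E : Type*} [NormedAddCommGroup E] [InnerProductSpace ℝ E] (e : sphere (0 : E) 1)

theorem add_smul_add_one_add_inner_smul_ne_zero (x : sphere (0 : E) 1) {c : ℝ} (hc : 0 ≤ c) :
    (c + max 0 (-inner ℝ (e : E) x)) • (x : E) + (1 + inner ℝ (e : E) x) • (e : E) ≠ 0 := by
  intro h
  have hex := congrArg (inner ℝ (e : E)) h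
  have hxx := congrArg (inner ℝ (x : E)) h
  simp only [inner_add_right, inner_smul_right, inner_zero_right, real_inner_comm (e : E) (x : E),
    inner_self_eq_one_of_norm_eq_one (norm_eq_of_mem_sphere e),
    inner_self_eq_one_of_norm_eq_one (norm_eq_of_mem_sphere x)] at hex hxx
  rcases le_total 0 (inner ℝ (e : E) x) with hpos | hneg
  · rw [max_eq_left (by linarith)] at hex
    nlinarith
  · rw [max_eq_right (by linarith)] at hex hxx
    have : (1 + inner ℝ (e : E) x) * (1 + c) = 0 := by linarith
    nlinarith

/-- A self-map of the sphere, homotopic to the identity, which collapses the hemisphere around `e`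
to the point `e`. -/
noncomputable def hemisphereCollapse : C(sphere (0 : E) 1, sphere (0 : E) 1) where
  toFun x := radialProj e
    (max 0 (-inner ℝ (e : E) x) • (x : E) + (1 + inner ℝ (e : E) x) • (e : E))
  continuous_toFun := continuous_radialProj_comp e (by fun_prop) fun x ↦ by
    simpa using add_smul_add_one_add_inner_smul_ne_zero e x le_rfl

theorem hemisphereCollapse_of_nonneg {x : sphere (0 : E) 1} (hx : 0 ≤ inner ℝ (e : E) x) :
    hemisphereCollapse e x = e := by
  rw [hemisphereCollapse, ContinuousMap.coe_mk, max_eq_left (neg_nonpos.2 hx), zero_smul, zero_add]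
  exact radialProj_smul_coe e (by positivity) e

theorem hemisphereCollapse_homotopic_id : (hemisphereCollapse e).Homotopic (.id _) := by
  refine homotopic_of_ne_neg fun x hx ↦ ?_
  let w := max 0 (-inner ℝ (e : E) x) • (x : E) + (1 + inner ℝ (e : E) x) • (e : E)
  have hw : w = -(‖w‖ • (x : E)) := calc
    w = ‖w‖ • (hemisphereCollapse e x : E) := (norm_smul_radialProj e w).symm
    _ = -(‖w‖ • (x : E)) := by simp [hx]
  refine add_smul_add_one_add_inner_smul_ne_zero e x (norm_nonneg w) ?_
  rw [add_smul, add_assoc]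
  exact add_eq_zero_iff_neg_eq.2 hw.symm

/-- The reflection of the sphere exchanging the hemispheres around `e` and `-e`. -/
noncomputable def hemisphereReflection : C(sphere (0 : E) 1, sphere (0 : E) 1) where
  toFun x := ⟨(ℝ ∙ (e : E))ᗮ.reflection x, by simp⟩
  continuous_toFun := by fun_prop

theorem inner_hemisphereReflection (x : sphere (0 : E) 1) :
    inner ℝ (e : E) (hemisphereReflection e x) = -inner ℝ (e : E) x := by
  have := (ℝ ∙ (e : E))ᗮ.reflection.inner_map_map (e : E) x
  rw [Submodule.reflection_orthogonalComplement_singleton_eq_neg, inner_neg_left] at this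
  exact neg_eq_iff_eq_neg.1 this

theorem hemisphereReflection_eq_self {x : sphere (0 : E) 1} (hx : inner ℝ (e : E) x = 0) :
    hemisphereReflection e x = x :=
  Subtype.ext <| Submodule.reflection_mem_subspace_eq_self <|
    Submodule.mem_orthogonal_singleton_iff_inner_right.2 hx

open Classical in
/-- The self-map of the sphere folding the hemisphere around `e` onto the one around `-e`. -/
noncomputable def hemisphereFold : C(sphere (0 : E) 1, sphere (0 : E) 1) where
  toFun x := if inner ℝ (e : E) x ≤ 0 then x else hemisphereReflection e x
  continuous_toFun := Continuous.if_le continuous_id (by fun_prop) (by fun_prop) continuous_const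
    fun _ hx ↦ (hemisphereReflection_eq_self e hx).symm

theorem hemisphereFold_of_nonpos {x : sphere (0 : E) 1} (hx : inner ℝ (e : E) x ≤ 0) :
    hemisphereFold e x = x :=
  if_pos hx

theorem hemisphereFold_of_nonneg {x : sphere (0 : E) 1} (hx : 0 ≤ inner ℝ (e : E) x) :
    hemisphereFold e x = hemisphereReflection e x := by
  rcases hx.eq_or_lt with hx0 | hx0
  · rw [hemisphereFold_of_nonpos e hx0.ge, hemisphereReflection_eq_self e hx0.symm]
  · exact if_neg hx0.not_ge

theorem nullhomotopic_hemisphereFold : (hemisphereFold e).Nullhomotopic := by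
  refine ⟨-e, homotopic_of_ne_neg fun x hx ↦ ?_⟩
  rw [ContinuousMap.const_apply, neg_neg] at hx
  have he : inner ℝ (e : E) (hemisphereFold e x) = 1 := by
    rw [hx, inner_self_eq_one_of_norm_eq_one (norm_eq_of_mem_sphere e)]
  rcases le_total (inner ℝ (e : E) x) 0 with h | h
  · rw [hemisphereFold_of_nonpos e h] at he
    linarith
  · rw [hemisphereFold_of_nonneg e h, inner_hemisphereReflection] at he
    linarith

end InnerProduct

section HomotopyExtension

variable {E : Type*} [NormedAddCommGroup E] [InnerProductSpace ℝ E] (e : sphere (0 : E) 1)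
  {A B C Y Z : Type*} [TopologicalSpace A] [TopologicalSpace B] [TopologicalSpace C]
  [TopologicalSpace Y] [TopologicalSpace Z]

theorem homotopic_comp_prodMk {f f' : C(A × B, C)} {a a' : C(Z, A)} {b b' : C(Z, B)}
    (hf : f.Homotopic f') (ha : a.Homotopic a') (hb : b.Homotopic b') :
    (f.comp (a.prodMk b)).Homotopic (f'.comp (a'.prodMk b')) :=
  hf.comp (ha.prodMk hb)

theorem exists_homotopic_eq_at_basepoint (g : C(sphere (0 : E) 1 × Y, Z)) {g' : C(Y, Z)}
    (hg : (g.comp ((const Y e).prodMk (.id Y))).Homotopic g') :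
    ∃ g₁, g.Homotopic g₁ ∧ ∀ y, g₁ (e, y) = g' y := by
  obtain ⟨η⟩ := hg
  have hη0 (y : Y) : η (0, y) = g (e, y) := by simp
  have hη1 (y : Y) : η (1, y) = g' y := by simp
  let K : I → sphere (0 : E) 1 × Y → Z := fun s p ↦
    if inner ℝ (e : E) p.1 ≤ 0 then g (hemisphereCollapse e p.1, p.2)
    else η (Set.projIcc 0 1 zero_le_one (s * inner ℝ (e : E) p.1), p.2)
  have hK : Continuous (Function.uncurry K) := by
    refine Continuous.if_le (by fun_prop) ?_ (by fun_prop) continuous_const ?_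
    · exact η.continuous.comp
        ((continuous_projIcc.comp (by fun_prop)).prodMk (by fun_prop))
    · rintro ⟨s, x, y⟩ hx
      simp only at hx ⊢
      rw [hemisphereCollapse_of_nonneg e hx.ge, hx, mul_zero, Set.projIcc_left]
      exact (hη0 y).symm
  have hK0 (p : sphere (0 : E) 1 × Y) : K 0 p = g (hemisphereCollapse e p.1, p.2) := by
    simp only [K]
    split_ifs with hx
    · rfl
    · rw [Set.Icc.coe_zero, zero_mul, Set.projIcc_left,
        hemisphereCollapse_of_nonneg e (le_of_not_ge hx)]
      exact hη0 p.2
  have hK1 (y : Y) : K 1 (e, y) = g' y := by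
    have hee : inner ℝ (e : E) (e : E) = 1 :=
      inner_self_eq_one_of_norm_eq_one (norm_eq_of_mem_sphere e)
    simp only [K, hee, not_le.2 one_pos, if_false, Set.Icc.coe_one, mul_one]
    rw [Set.projIcc_right]
    exact hη1 y
  have hcollapse := (hemisphereCollapse_homotopic_id e).prodMap (Homotopic.refl (.id Y))
  exact ⟨⟨K 1, hK.comp (by fun_prop : Continuous fun p ↦ ((1 : I), p))⟩,
    ((Homotopic.refl g).comp hcollapse.symm).trans
      ⟨{ toFun := Function.uncurry K, map_zero_left := hK0, map_one_left := fun _ ↦ rfl }⟩, hK1⟩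

theorem exists_homotopic_eq_on_hemisphere_prod (g : C(sphere (0 : E) 1 × Y, Z)) {g' : C(Y, Z)}
    (hg : (g.comp ((const Y e).prodMk (.id Y))).Homotopic g') :
    ∃ g₁, g.Homotopic g₁ ∧
      ∀ (x : sphere (0 : E) 1) y, 0 ≤ inner ℝ (e : E) x → g₁ (x, y) = g' y := by
  obtain ⟨k, hgk, hk⟩ := exists_homotopic_eq_at_basepoint e g hg
  have hcollapse := (hemisphereCollapse_homotopic_id e).prodMap (Homotopic.refl (.id Y))
  refine ⟨_, hgk.trans ((Homotopic.refl k).comp hcollapse.symm), fun x y hx ↦ ?_⟩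
  calc k (hemisphereCollapse e x, y) = k (e, y) := by rw [hemisphereCollapse_of_nonneg e hx]
    _ = g' y := hk y

theorem exists_homotopic_eq_on_hemisphere [PathConnectedSpace A] (f : C(sphere (0 : E) 1, A))
    (a : A) :
    ∃ f₁, f.Homotopic f₁ ∧ ∀ x : sphere (0 : E) 1, 0 ≤ inner ℝ (e : E) x → f₁ x = a := by
  obtain ⟨f₁, hf, hf₁⟩ := exists_homotopic_eq_on_hemisphere_prod e
    (f.comp (fst : C(sphere (0 : E) 1 × Unit, _))) (homotopic_const_const (f e) a)
  let incl : C(sphere (0 : E) 1, sphere (0 : E) 1 × Unit) :=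
    (ContinuousMap.id _).prodMk (const _ ())
  exact ⟨f₁.comp incl, hf.comp (.refl incl), fun x hx ↦ hf₁ x () hx⟩

-- Once `g₁ (x, ·)` is the identity for `x` in the hemisphere around `e`, its homotopy inverse is
-- `g₁ (ρ x, ·)`, with `ρ` the reflection: the composite is `g₁ (ν x, ·)`, with `ν` the fold.
theorem exists_comp_prodMk_fst_homotopic_snd [PathConnectedSpace (sphere (0 : E) 1)]
    (g : C(sphere (0 : E) 1 × Y, Y))
    (hg : (g.comp ((const Y e).prodMk (.id Y))).Homotopic (.id Y)) :
    ∃ g' : C(sphere (0 : E) 1 × Y, Y), (g.comp (fst.prodMk g')).Homotopic snd := by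
  obtain ⟨g₁, hgg₁, hg₁⟩ := exists_homotopic_eq_on_hemisphere_prod e g hg
  simp only [ContinuousMap.id_apply] at hg₁
  let g' : C(sphere (0 : E) 1 × Y, Y) :=
    g₁.comp (((hemisphereReflection e).comp fst).prodMk snd)
  have hfold : g₁.comp (fst.prodMk g') = g₁.comp (((hemisphereFold e).comp fst).prodMk snd) := by
    ext ⟨x, y⟩
    change g₁ (x, g₁ (hemisphereReflection e x, y)) = g₁ (hemisphereFold e x, y)
    rcases le_total (inner ℝ (e : E) x) 0 with hx | hx
    · rw [hemisphereFold_of_nonpos e hx, hg₁ (hemisphereReflection e x)]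
      rwa [inner_hemisphereReflection, neg_nonneg]
    · rw [hemisphereFold_of_nonneg e hx, hg₁ x _ hx]
  have hconst : g₁.comp (((const (sphere (0 : E) 1) e).comp fst).prodMk snd) = snd :=
    ContinuousMap.ext fun p ↦ hg₁ e p.2 real_inner_self_nonneg
  have hnull := homotopic_const_of_nullhomotopic (nullhomotopic_hemisphereFold e) e
  refine ⟨g', (homotopic_comp_prodMk hgg₁ (.refl fst) (.refl g')).trans ?_⟩
  rw [hfold]
  refine (homotopic_comp_prodMk (.refl g₁) (hnull.comp (.refl fst)) (.refl snd)).trans ?_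
  rw [hconst]

-- Make `f` constant on one hemisphere and `c` on the other: where `f` is constant, `g` does not see
-- its second argument.
theorem comp_prodMk_homotopic_comp_prodMk_const {E' : Type*} [NormedAddCommGroup E']
    [InnerProductSpace ℝ E'] [PathConnectedSpace (sphere (0 : E') 1)] [PathConnectedSpace Y]
    (e' : sphere (0 : E') 1) {g : C(sphere (0 : E') 1 × Y, Z)}
    (hg : (g.comp ((const Y e').prodMk (.id Y))).Nullhomotopic)
    (f : C(sphere (0 : E) 1, sphere (0 : E') 1)) (c : C(sphere (0 : E) 1, Y)) (y : Y) :
    (g.comp (f.prodMk c)).Homotopic (g.comp (f.prodMk (const _ y))) := by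
  obtain ⟨z, hz⟩ := hg
  obtain ⟨g₁, hgg₁, hg₁⟩ := exists_homotopic_eq_on_hemisphere_prod e' g hz
  rcases isEmpty_or_nonempty (sphere (0 : E) 1) with hE | ⟨⟨e⟩⟩
  · rw [show f.prodMk c = f.prodMk (const _ y) from ContinuousMap.ext fun x ↦ hE.elim x]
  obtain ⟨f₁, hff₁, hf₁⟩ := exists_homotopic_eq_on_hemisphere (-e) f e'
  obtain ⟨c₁, hcc₁, hc₁⟩ := exists_homotopic_eq_on_hemisphere e c y
  have heq : g₁.comp (f₁.prodMk c₁) = g₁.comp (f₁.prodMk (const _ y)) := by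
    ext x
    change g₁ (f₁ x, c₁ x) = g₁ (f₁ x, y)
    rcases le_total 0 (inner ℝ (e : E) x) with hx | hx
    · rw [hc₁ x hx]
    · have hfx : f₁ x = e' := hf₁ x (by simpa using hx)
      rw [hfx, hg₁ e' _ real_inner_self_nonneg, hg₁ e' _ real_inner_self_nonneg]
      simp only [const_apply]
  refine (homotopic_comp_prodMk hgg₁ hff₁ hcc₁).trans ?_
  rw [heq]
  exact (homotopic_comp_prodMk hgg₁ hff₁ (.refl _)).symm

theorem exists_comp_homotopic_id {F : Type*} [NormedAddCommGroup F] [InnerProductSpace ℝ F]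
    [PathConnectedSpace (sphere (0 : E) 1)] [PathConnectedSpace (sphere (0 : F) 1)]
    (e' : sphere (0 : F) 1)
    (Φ : C(sphere (0 : E) 1 × sphere (0 : F) 1, sphere (0 : E) 1 × sphere (0 : F) 1))
    (hfst : ∀ b : C(sphere (0 : E) 1, sphere (0 : F) 1),
      ((fst.comp Φ).comp ((ContinuousMap.id _).prodMk b)).Homotopic (.id _))
    (hsnd : ((snd.comp Φ).comp ((const _ e).prodMk (.id _))).Homotopic (.id _)) :
    ∃ Ψ, (Φ.comp Ψ).Homotopic (.id _) := by
  obtain ⟨g', hg'⟩ := exists_comp_prodMk_fst_homotopic_snd e (snd.comp Φ) hsnd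
  let H : C(sphere (0 : E) 1 × sphere (0 : F) 1, sphere (0 : E) 1 × sphere (0 : F) 1) :=
    fst.prodMk g'
  obtain ⟨f', hf'⟩ := exists_comp_prodMk_fst_homotopic_snd e'
    (((fst.comp Φ).comp H).comp (snd.prodMk fst))
    (hfst (g'.comp ((ContinuousMap.id _).prodMk (const _ e'))))
  let G : C(sphere (0 : E) 1 × sphere (0 : F) 1, sphere (0 : E) 1 × sphere (0 : F) 1) :=
    (f'.comp (snd.prodMk fst)).prodMk snd
  have hfstG : (((fst.comp Φ).comp H).comp G).Homotopic fst := hf'.comp (.refl (snd.prodMk fst))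
  have hsndG : (((snd.comp Φ).comp H).comp G).Homotopic snd := hg'.comp (.refl G)
  exact ⟨H.comp G, hfstG.prodMk hsndG⟩

end HomotopyExtension

end Hemispheres

/-! ### Dominations of the wedge sum -/

section Domination

open Metric Module ContinuousMap

namespace Wedge

variable {X Y : Type} [TopologicalSpace X] [TopologicalSpace Y] {x₀ : X} {y₀ : Y}

/-- The inclusion of the first summand of a wedge sum. -/
def inl : C(X, Wedge X Y x₀ y₀) where
  toFun x := Quot.mk _ (Sum.inl x)
  continuous_toFun := continuous_quot_mk.comp continuous_inl

/-- The inclusion of the second summand of a wedge sum. -/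
def inr : C(Y, Wedge X Y x₀ y₀) where
  toFun y := Quot.mk _ (Sum.inr y)
  continuous_toFun := continuous_quot_mk.comp continuous_inr

/-- The retraction of a wedge sum onto its first summand, collapsing the second one. -/
def fst : C(Wedge X Y x₀ y₀, X) where
  toFun := Quot.lift (Sum.elim id fun _ ↦ x₀) (by rintro _ _ ⟨rfl, rfl⟩; rfl)
  continuous_toFun := continuous_quot_lift _ (by fun_prop)

/-- The retraction of a wedge sum onto its second summand, collapsing the first one. -/
def snd : C(Wedge X Y x₀ y₀, Y) where
  toFun := Quot.lift (Sum.elim (fun _ ↦ y₀) id) (by rintro _ _ ⟨rfl, rfl⟩; rfl)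
  continuous_toFun := continuous_quot_lift _ (by fun_prop)

theorem fst_eq_or_snd_eq (w : Wedge X Y x₀ y₀) : fst w = x₀ ∨ snd w = y₀ := by
  rcases w with ⟨x | y⟩
  exacts [Or.inr rfl, Or.inl rfl]

end Wedge

theorem pathConnectedSpace_sphere {E : Type*} [NormedAddCommGroup E] [NormedSpace ℝ E]
    (hE : 1 < finrank ℝ E) : PathConnectedSpace (sphere (0 : E) 1) :=
  isPathConnected_iff_pathConnectedSpace.1 <|
    isPathConnected_sphere (one_lt_rank_of_one_lt_finrank hE) 0 zero_le_one

variable {E F : Type*} [NormedAddCommGroup E] [InnerProductSpace ℝ E] [FiniteDimensional ℝ E]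
  [NormedAddCommGroup F] [InnerProductSpace ℝ F] [FiniteDimensional ℝ F]

theorem exists_comp_homotopic_id_of_finrank_lt_finrank (hE : 1 < finrank ℝ E)
    (hEF : finrank ℝ E < finrank ℝ F) (e : sphere (0 : E) 1) (e' : sphere (0 : F) 1)
    {Φ : C(sphere (0 : E) 1 × sphere (0 : F) 1, sphere (0 : E) 1 × sphere (0 : F) 1)}
    {i : C(sphere (0 : E) 1, sphere (0 : E) 1 × sphere (0 : F) 1)}
    {j : C(sphere (0 : F) 1, sphere (0 : E) 1 × sphere (0 : F) 1)}
    (hi : ((fst.comp Φ).comp i).Homotopic (.id _)) (hj : ((snd.comp Φ).comp j).Homotopic (.id _)) :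
    ∃ Ψ, (Φ.comp Ψ).Homotopic (.id _) := by
  have := pathConnectedSpace_sphere hE
  have := pathConnectedSpace_sphere (hE.trans hEF)
  have hnull (b : C(sphere (0 : E) 1, sphere (0 : F) 1)) : b.Nullhomotopic :=
    nullhomotopic_of_finrank_lt_finrank isClosed_sphere hEF b
  let D : C(sphere (0 : E) 1 × sphere (0 : F) 1, sphere (0 : E) 1 × sphere (0 : F) 1) :=
    (fst.comp i).prodMap (snd.comp j)
  have hfst (b : C(sphere (0 : E) 1, sphere (0 : F) 1)) :
      ((fst.comp (Φ.comp D)).comp ((ContinuousMap.id _).prodMk b)).Homotopic (.id _) :=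
    (homotopic_comp_prodMk (.refl (fst.comp Φ)) (.refl (fst.comp i))
      (homotopic_of_nullhomotopic (hnull ((snd.comp j).comp b)) (hnull (snd.comp i)))).trans hi
  have hsnd : ((snd.comp (Φ.comp D)).comp ((const _ e).prodMk (.id _))).Homotopic (.id _) :=
    (comp_prodMk_homotopic_comp_prodMk_const e' (g := (snd.comp Φ).comp (snd.prodMk fst)) (hnull _)
      (snd.comp j) (fst.comp j) (i e).1).symm.trans hj
  obtain ⟨Ψ, hΨ⟩ := exists_comp_homotopic_id e e' (Φ.comp D) hfst hsnd
  exact ⟨D.comp Ψ, hΨ⟩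

end Domination

theorem wedge_not_dominated_by_prod_succ_general {E F : Type} [NormedAddCommGroup E]
    [InnerProductSpace ℝ E] [FiniteDimensional ℝ E] [NormedAddCommGroup F] [InnerProductSpace ℝ F]
    [FiniteDimensional ℝ F] (hE : 1 < Module.finrank ℝ E)
    (hEF : Module.finrank ℝ E < Module.finrank ℝ F) (e : Metric.sphere (0 : E) 1)
    (e' : Metric.sphere (0 : F) 1) :
    ¬ HDominates (Metric.sphere (0 : E) 1 × Metric.sphere (0 : F) 1)
        (Wedge (Metric.sphere (0 : E) 1) (Metric.sphere (0 : F) 1) e e') := by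
  rintro ⟨d, u, hdu⟩
  let Φ : C(Metric.sphere (0 : E) 1 × Metric.sphere (0 : F) 1,
      Metric.sphere (0 : E) 1 × Metric.sphere (0 : F) 1) :=
    (Wedge.fst.prodMk Wedge.snd).comp d
  have hfst : (Wedge.fst.comp ((d.comp u).comp Wedge.inl)).Homotopic (.id _) :=
    (ContinuousMap.Homotopic.refl Wedge.fst).comp (hdu.comp (.refl Wedge.inl))
  have hsnd : (Wedge.snd.comp ((d.comp u).comp Wedge.inr)).Homotopic (.id _) :=
    (ContinuousMap.Homotopic.refl Wedge.snd).comp (hdu.comp (.refl Wedge.inr))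
  obtain ⟨Ψ, hΨ⟩ := exists_comp_homotopic_id_of_finrank_lt_finrank hE hEF e e'
    (Φ := Φ) (i := u.comp Wedge.inl) (j := u.comp Wedge.inr) hfst hsnd
  exact not_homotopic_id_of_forall_fst_eq_or_snd_eq e' (hE.trans hEF) e (Φ.comp Ψ)
    (fun z ↦ (d (Ψ z)).fst_eq_or_snd_eq) hΨ

/-- For `n ≥ 2`, the wedge `Sⁿ ∨ Sⁿ⁺¹` is not homotopy dominated by `Sⁿ × Sⁿ⁺¹`. -/
theorem wedge_not_dominated_by_prod_succ (n : ℕ) (hn : 2 ≤ n) :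
    ¬ HDominates (USphere n × USphere (n + 1))
        (Wedge (USphere n) (USphere (n + 1)) (spherePt n) (spherePt (n + 1))) :=
  wedge_not_dominated_by_prod_succ_general (by rw [finrank_euclideanSpace_fin]; omega)
    (by simp only [finrank_euclideanSpace_fin]; omega) _ _
end
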